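/- arXiv:1809.05191 — 2 statements merged into one kernel-verified Lean document; each statement's English description precedes it below -/
import Mathlib

section
/- Let 𝔽 be ℝ or ℂ. A homogeneous cubic polynomial Φ ∈ 𝔽[x,y,z] is irreducible over 𝔽 if and only if there exist g ∈ GL₃(𝔽), a nonzero constant c ∈ 𝔽, and a, b ∈ 𝔽 such that Φ ∘ g = c·(y²z − x³ − a·x z² − b·z³) identically. Moreover: (a) if this holds both for the pair (a, b) and for the pair (a′, b′) (with possibly different g and c), then (a′, b′) = (t⁴a, t⁶b) for some nonzero t ∈ 𝔽; and (b) the curve defined by y²z = x³ + a x z² + b z³ has finite stabilizer in PGL₃(𝔽) if and only if (a, b) ≠ (0, 0). -/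
open MvPolynomial
open scoped MatrixGroups

noncomputable section

/-- Substitution of a linear change of variables into a polynomial in three variables:
`Φ ↦ Φ ∘ M`. -/
def substMat {𝔽 : Type*} [Field 𝔽] (M : Matrix (Fin 3) (Fin 3) 𝔽) :
    MvPolynomial (Fin 3) 𝔽 →ₐ[𝔽] MvPolynomial (Fin 3) 𝔽 :=
  aeval fun i => ∑ j, C (M i j) * X j

/-- The Weierstrass normal-form cubic `y²z − x³ − a·xz² − b·z³` (the curve
`y²z = x³ + a x z² + b z³`). -/
def weierstrass {𝔽 : Type*} [Field 𝔽] (a b : 𝔽) : MvPolynomial (Fin 3) 𝔽 :=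
  X 1 ^ 2 * X 2 - X 0 ^ 3 - C a * (X 0 * X 2 ^ 2) - C b * (X 2 ^ 3)

/-- The stabilizer in `PGL₃(𝔽)` of the curve defined by `Ψ`: the image in
`PGL₃(𝔽) = GL₃(𝔽)/center` of the set of `g ∈ GL₃(𝔽)` with `Ψ ∘ g` a nonzero scalar
multiple of `Ψ`. -/
def projStabilizer {𝔽 : Type*} [Field 𝔽] (Ψ : MvPolynomial (Fin 3) 𝔽) :
    Set (GL (Fin 3) 𝔽 ⧸ Subgroup.center (GL (Fin 3) 𝔽)) :=
  QuotientGroup.mk '' {g : GL (Fin 3) 𝔽 | ∃ c : 𝔽, c ≠ 0 ∧ substMat (↑g) Ψ = c • Ψ}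

/-!
A plane cubic and its Hessian curve are both cubics, and two cubics always have a common rational
point: over an algebraically closed field by Krull's height theorem, over `ℝ` by Borsuk–Ulam, since
forms of odd degree are odd functions. If such a point is smooth on the cubic, it is a flex; moving
it to `(0 : 1 : 0)` with tangent `z = 0` and completing the square and the cube gives the normal
form. If it is singular, an irreducible cubic becomes `y (x² + βz²) + A x z² + B z³`, and shearing
`y` makes `A x z² + B z³` the cube of a linear form, whose zero is a flex.

Conversely the normal form is irreducible by Eisenstein's criterion. Its parameters are read off
from the Hessians of the members of the pencil spanned by the cubic and its Hessian. The stabilizer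
permutes the finitely many flexes, and the projectivities fixing the flex at infinity are of the
form `diag(p, 1, p³)`, sending `(a, b)` to `(p⁴a, p⁶b)`.
-/

section Dimension

variable {σ R : Type*} [CommRing R] [IsDomain R]

theorem card_le_height_ker_aeval_piecewise [DecidableEq σ] (s : Finset σ) :
    (s.card : ℕ∞) ≤
      (RingHom.ker (aeval (s.piecewise 0 X) : MvPolynomial σ R →ₐ[R] MvPolynomial σ R)).height := by
  induction s using Finset.induction_on with
  | empty => simp
  | insert i s hi ih =>
    rw [Finset.card_insert_of_notMem hi, Nat.cast_succ]
    have ker_isPrime (t : Finset σ) : (RingHom.ker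
        (aeval (t.piecewise 0 X) : MvPolynomial σ R →ₐ[R] MvPolynomial σ R)).IsPrime :=
      RingHom.ker_isPrime _
    refine (by gcongr : _ ≤ _ + (1 : ℕ∞)).trans (Ideal.height_add_one_le_of_lt_of_isPrime ?_)
    have comp_eq : (aeval ((insert i s).piecewise 0 X)).comp (aeval (s.piecewise 0 X)) =
        (aeval ((insert i s).piecewise 0 X) : MvPolynomial σ R →ₐ[R] MvPolynomial σ R) := by
      ext1 j
      by_cases hj : j ∈ s <;> simp [hj, Finset.piecewise]
    refine lt_of_le_of_ne (fun p hp => ?_) fun h => ?_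
    · rw [RingHom.mem_ker] at hp ⊢
      rw [← comp_eq, AlgHom.comp_apply, hp, map_zero]
    · have hX : X i ∈ RingHom.ker (aeval ((insert i s).piecewise 0 X) :
          MvPolynomial σ R →ₐ[R] MvPolynomial σ R) := by simp [RingHom.mem_ker]
      rw [← h] at hX
      simp [RingHom.mem_ker, hi] at hX

theorem card_le_height_ker_constantCoeff [Fintype σ] :
    (Fintype.card σ : ℕ∞) ≤ (RingHom.ker (constantCoeff (R := R) (σ := σ))).height := by
  classical
  have hker : RingHom.ker (constantCoeff (R := R) (σ := σ)) = RingHom.ker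
      (aeval (Finset.univ.piecewise 0 X) : MvPolynomial σ R →ₐ[R] MvPolynomial σ R) := by
    ext p
    simp only [RingHom.mem_ker, Finset.piecewise_univ, aeval_zero, algebraMap_eq, C_eq_zero]
  rw [hker]
  exact card_le_height_ker_aeval_piecewise Finset.univ

end Dimension

theorem exists_ne_zero_forall_eval_eq_zero {σ k : Type*} [Fintype σ] [Field k] [IsAlgClosed k]
    (S : Finset (MvPolynomial σ k)) (hS : S.card < Fintype.card σ)
    (h0 : ∀ p ∈ S, constantCoeff p = 0) :
    ∃ v : σ → k, v ≠ 0 ∧ ∀ p ∈ S, eval v p = 0 := by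
  by_contra! hcon
  have zeroLocus_eq : zeroLocus k (Ideal.span (S : Set (MvPolynomial σ k))) = {0} := by
    ext v
    simp only [zeroLocus_span, aeval_eq_eval, Set.mem_ofPred_eq, Set.mem_singleton_iff]
    refine ⟨fun hv => ?_, ?_⟩
    · by_contra hv0
      obtain ⟨p, hp, hpv⟩ := hcon v hv0
      exact hpv (hv p hp)
    · rintro rfl p hp
      simpa [eval_zero] using h0 p hp
  have radical_eq : (Ideal.span (S : Set (MvPolynomial σ k))).radical =
      RingHom.ker (constantCoeff (R := k) (σ := σ)) := by
    rw [← vanishingIdeal_zeroLocus_eq_radical (K := k), zeroLocus_eq]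
    ext p
    simp [RingHom.mem_ker, aeval_eq_eval]
  have mem_minimalPrimes : RingHom.ker (constantCoeff (R := k) (σ := σ)) ∈
      (Ideal.span (S : Set (MvPolynomial σ k))).minimalPrimes := by
    refine ⟨⟨RingHom.ker_isPrime _, radical_eq ▸ Ideal.le_radical⟩, fun J hJ _ => ?_⟩
    exact radical_eq ▸ hJ.1.radical_le_iff.2 hJ.2
  have hle := card_le_height_ker_constantCoeff.trans
    (Ideal.height_le_card_of_mem_minimalPrimes_span_finset mem_minimalPrimes)
  exact hS.not_ge (by exact_mod_cast hle)

section BorsukUlam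

theorem exists_eq_zero_of_neg_of_norm_eq_one {F : ℂ → ℂ} (hF : Continuous F)
    (hodd : ∀ w, ‖w‖ = 1 → F (-w) = -F w) : ∃ w, F w = 0 := by
  by_contra! hne
  obtain ⟨G, hG, hexp⟩ := Complex.exists_continuousOn_eqOn_exp_comp
    ((Homeomorph.Set.univ ℂ).toHomotopyEquiv.simplyConnectedSpace_iff.2 inferInstance)
    isOpen_univ hF.continuousOn (by simpa using hne)
  rw [continuousOn_univ] at hG
  have exp_G : ∀ w, Complex.exp (G w) = F w := fun w => hexp (Set.mem_univ w)
  let D : ℂ → ℝ := fun w => (G (-w) - G w).im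
  have D_continuous : Continuous D := by fun_prop
  have D_ne_zero : ∀ w, ‖w‖ = 1 → D w ≠ 0 := by
    intro w hw hD
    have hexp_neg : Complex.exp (G (-w) - G w) = -1 := by
      rw [Complex.exp_sub, exp_G, exp_G, hodd w hw, neg_div, div_self (hne w)]
    have hre := congrArg Complex.re hexp_neg
    rw [Complex.exp_re, show (G (-w) - G w).im = 0 from hD, Real.cos_zero, mul_one] at hre
    have := Real.exp_pos (G (-w) - G w).re
    rw [hre] at this
    norm_num at this
  have D_neg : D (-1) = -D 1 := by simp [D]
  have hsphere : IsPreconnected (Metric.sphere (0 : ℂ) 1) :=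
    isPreconnected_sphere (by simp [Complex.rank_real_complex]) 0 1
  obtain ⟨w, hw, hDw⟩ : (0 : ℝ) ∈ D '' Metric.sphere 0 1 := by
    rcases le_total (D 1) 0 with h | h
    · exact hsphere.intermediate_value (a := 1) (b := -1) (by simp) (by simp)
        D_continuous.continuousOn ⟨h, by linarith⟩
    · exact hsphere.intermediate_value (a := -1) (b := 1) (by simp) (by simp)
        D_continuous.continuousOn ⟨by linarith, h⟩
  exact D_ne_zero w (by simpa using hw) hDw

theorem exists_ne_zero_eq_zero_of_odd {F : (Fin 3 → ℝ) → ℂ} (hF : Continuous F)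
    (hodd : ∀ v, F (-v) = -F v) : ∃ v, v ≠ 0 ∧ F v = 0 := by
  let hemisphere : ℂ → (Fin 3 → ℝ) := fun w => ![w.re, w.im, √(1 - ‖w‖ ^ 2)]
  have hemisphere_continuous : Continuous hemisphere := by
    refine continuous_pi fun i => ?_
    fin_cases i <;> simp only [hemisphere] <;> dsimp <;> fun_prop
  have hemisphere_neg : ∀ w, ‖w‖ = 1 → hemisphere (-w) = -hemisphere w := by
    intro w hw
    ext i
    fin_cases i <;> simp [hemisphere, hw]
  obtain ⟨w, hw⟩ := exists_eq_zero_of_neg_of_norm_eq_one (hF.comp hemisphere_continuous)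
    fun w hw => by simp only [Function.comp_apply, hemisphere_neg w hw, hodd]
  refine ⟨hemisphere w, fun h0 => ?_, hw⟩
  obtain rfl : w = 0 := Complex.ext (congrFun h0 0) (congrFun h0 1)
  simpa [hemisphere] using congrFun h0 2

end BorsukUlam

theorem eval_smul_of_isHomogeneous {σ R : Type*} [CommSemiring R] {φ : MvPolynomial σ R} {n : ℕ}
    (hφ : φ.IsHomogeneous n) (r : R) (v : σ → R) : eval (r • v) φ = r ^ n * eval v φ := by
  rw [eval_eq, eval_eq, Finset.mul_sum]
  refine Finset.sum_congr rfl fun d hd => ?_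
  simp only [Pi.smul_apply, smul_eq_mul, mul_pow, Finset.prod_mul_distrib,
    Finset.prod_pow_eq_pow_sum, ← hφ.degree_eq_sum_deg_support hd]
  exact mul_left_comm _ _ _

section PlaneCubicsMeet

/-- Any two plane cubic curves over `k` have a common `k`-rational point: a weak form of Bézout's
theorem, valid over `ℝ` as well as over algebraically closed fields. -/
def PlaneCubicsMeet (k : Type*) [Field k] : Prop :=
  ∀ f g : MvPolynomial (Fin 3) k, f.IsHomogeneous 3 → g.IsHomogeneous 3 →
    ∃ v : Fin 3 → k, v ≠ 0 ∧ eval v f = 0 ∧ eval v g = 0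

theorem planeCubicsMeet_of_isAlgClosed (k : Type*) [Field k] [IsAlgClosed k] :
    PlaneCubicsMeet k := by
  classical
  intro f g hf hg
  have constantCoeff_eq {p : MvPolynomial (Fin 3) k} (hp : p.IsHomogeneous 3) :
      constantCoeff p = 0 := hp.coeff_eq_zero (by simp)
  obtain ⟨v, hv, hS⟩ := exists_ne_zero_forall_eval_eq_zero {f, g}
    (Finset.card_le_two.trans_lt (by simp)) (by simp [constantCoeff_eq hf, constantCoeff_eq hg])
  exact ⟨v, hv, hS f (by simp), hS g (by simp)⟩

theorem planeCubicsMeet_real : PlaneCubicsMeet ℝ := by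
  intro f g hf hg
  have eval_neg {p : MvPolynomial (Fin 3) ℝ} (hp : p.IsHomogeneous 3) (v : Fin 3 → ℝ) :
      eval (-v) p = -eval v p := by
    rw [← neg_one_smul ℝ, eval_smul_of_isHomogeneous hp]
    ring
  obtain ⟨v, hv, hzero⟩ := exists_ne_zero_eq_zero_of_odd
    (F := fun v => ⟨eval v f, eval v g⟩)
    (Complex.equivRealProdCLM.symm.continuous.comp
      ((MvPolynomial.continuous_eval f).prodMk (MvPolynomial.continuous_eval g)))
    fun v => Complex.ext (eval_neg hf v) (eval_neg hg v)
  exact ⟨v, hv, congrArg Complex.re hzero, congrArg Complex.im hzero⟩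

theorem PlaneCubicsMeet.of_ringEquiv {k l : Type*} [Field k] [Field l] (e : k ≃+* l)
    (h : PlaneCubicsMeet k) : PlaneCubicsMeet l := by
  intro f g hf hg
  obtain ⟨v, hv, hfv, hgv⟩ := h (map (e.symm : l →+* k) f) (map (e.symm : l →+* k) g)
    (hf.map _) (hg.map _)
  have eval_comp_map : (eval v).comp (map (e.symm : l →+* k)) =
      (e.symm : l →+* k).comp (eval (e ∘ v)) := ringHom_ext (by simp) (by simp)
  have eval_eq_zero {p : MvPolynomial (Fin 3) l} (hp : eval v (map (e.symm : l →+* k) p) = 0) :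
      eval (e ∘ v) p = 0 :=
    e.symm.injective ((DFunLike.congr_fun eval_comp_map p).symm.trans (hp.trans (map_zero _).symm))
  refine ⟨e ∘ v, fun h0 => hv ?_, eval_eq_zero hfv, eval_eq_zero hgv⟩
  ext i
  simpa using congrFun h0 i

theorem planeCubicsMeet_of_rclike (𝔽 : Type*) [RCLike 𝔽] : PlaneCubicsMeet 𝔽 := by
  rcases RCLike.I_eq_zero_or_im_I_eq_one (K := 𝔽) with h | h
  · exact planeCubicsMeet_real.of_ringEquiv (RCLike.realRingEquiv h).symm
  · exact (planeCubicsMeet_of_isAlgClosed ℂ).of_ringEquiv (RCLike.complexRingEquiv h).symm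

end PlaneCubicsMeet

section Substitution

variable {k : Type*} [Field k]

theorem substMat_substMat (M N : Matrix (Fin 3) (Fin 3) k) (Φ : MvPolynomial (Fin 3) k) :
    substMat N (substMat M Φ) = substMat (M * N) Φ := by
  have : (substMat N).comp (substMat M) = substMat (M * N) := by
    ext1 i
    simp only [substMat, AlgHom.comp_apply, aeval_X, map_sum, map_mul, Matrix.mul_apply,
      algHom_C, algebraMap_eq, Finset.mul_sum, Finset.sum_mul]
    rw [Finset.sum_comm]
    simp only [mul_assoc]
  exact DFunLike.congr_fun this Φ

theorem substMat_one (Φ : MvPolynomial (Fin 3) k) : substMat 1 Φ = Φ := by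
  have : substMat (1 : Matrix (Fin 3) (Fin 3) k) = AlgHom.id k _ := by
    ext1 i
    simp [substMat, Matrix.one_apply]
  exact DFunLike.congr_fun this Φ

theorem eval_substMat (M : Matrix (Fin 3) (Fin 3) k) (Φ : MvPolynomial (Fin 3) k)
    (v : Fin 3 → k) : eval v (substMat M Φ) = eval (M.mulVec v) Φ := by
  have : (aeval v).comp (substMat M) = aeval (M.mulVec v) := by
    ext1 i
    simp [substMat, Matrix.mulVec, dotProduct]
  simpa [aeval_eq_eval] using DFunLike.congr_fun this Φ

theorem isHomogeneous_substMat (M : Matrix (Fin 3) (Fin 3) k) {Φ : MvPolynomial (Fin 3) k}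
    {n : ℕ} (hΦ : Φ.IsHomogeneous n) : (substMat M Φ).IsHomogeneous n := by
  simpa [substMat] using hΦ.aeval (fun i => ∑ j, C (M i j) * X j) fun i =>
    IsHomogeneous.sum _ _ _ fun j _ => isHomogeneous_C_mul_X _ _

theorem pderiv_substMat (M : Matrix (Fin 3) (Fin 3) k) (i : Fin 3) (Φ : MvPolynomial (Fin 3) k) :
    pderiv i (substMat M Φ) = ∑ l, C (M l i) * substMat M (pderiv l Φ) := by
  induction Φ using MvPolynomial.induction_on with
  | C a => simp [substMat, algebraMap_eq]
  | add p q hp hq => simp only [map_add, hp, hq, mul_add, Finset.sum_add_distrib]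
  | mul_X p n hp =>
    have pderiv_X_comp : pderiv i (substMat M (X n)) = C (M n i) := by
      simp [substMat, pderiv_X, Pi.single_apply]
    simp only [map_mul, Derivation.leibniz, hp, pderiv_X_comp, smul_eq_mul, map_add, pderiv_X,
      mul_add, Finset.sum_add_distrib, Pi.single_apply, Finset.mul_sum]
    refine congrArg₂ (· + ·) ?_ (Finset.sum_congr rfl fun l _ => mul_left_comm _ _ _)
    simp [mul_comm, apply_ite]

theorem substMat_inv_substMat (g : GL (Fin 3) k) (Φ : MvPolynomial (Fin 3) k) :
    substMat ↑g⁻¹ (substMat ↑g Φ) = Φ := by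
  rw [substMat_substMat, ← Units.val_mul, mul_inv_cancel, Units.val_one, substMat_one]

theorem substMat_inv_of_substMat_eq_smul {g : GL (Fin 3) k} {c : k} (hc : c ≠ 0)
    {Φ Ψ : MvPolynomial (Fin 3) k} (h : substMat ↑g Φ = c • Ψ) :
    substMat ↑g⁻¹ Ψ = c⁻¹ • Φ := by
  rw [eq_inv_smul_iff₀ hc, ← map_smul, ← h, substMat_inv_substMat]

theorem substMat_mul_of_substMat_eq_smul {g g' : GL (Fin 3) k} {c c' : k}
    {Φ Ψ Θ : MvPolynomial (Fin 3) k} (h : substMat ↑g Φ = c • Ψ) (h' : substMat ↑g' Ψ = c' • Θ) :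
    substMat ↑(g * g') Φ = (c * c') • Θ := by
  rw [Units.val_mul, ← substMat_substMat, h, map_smul, h', smul_smul]

theorem irreducible_substMat_iff (g : GL (Fin 3) k) (Φ : MvPolynomial (Fin 3) k) :
    Irreducible (substMat ↑g Φ) ↔ Irreducible Φ := by
  let e : MvPolynomial (Fin 3) k ≃ₐ[k] MvPolynomial (Fin 3) k :=
    AlgEquiv.ofAlgHom (substMat ↑g) (substMat ↑g⁻¹)
      (AlgHom.ext fun p => by
        simpa only [inv_inv, AlgHom.comp_apply, AlgHom.id_apply] using substMat_inv_substMat g⁻¹ p)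
      (AlgHom.ext fun p => substMat_inv_substMat g p)
  exact MulEquiv.irreducible_iff e

/-- `Φ` and `Ψ` define projectively equivalent plane curves: they agree up to an invertible linear
change of coordinates and a nonzero constant factor. -/
def ProjEquiv (Φ Ψ : MvPolynomial (Fin 3) k) : Prop :=
  ∃ (g : GL (Fin 3) k) (c : k), c ≠ 0 ∧ substMat ↑g Φ = c • Ψ

namespace ProjEquiv

variable {Φ Ψ Θ : MvPolynomial (Fin 3) k}

theorem symm : ProjEquiv Φ Ψ → ProjEquiv Ψ Φ := fun ⟨g, c, hc, h⟩ =>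
  ⟨g⁻¹, c⁻¹, inv_ne_zero hc, substMat_inv_of_substMat_eq_smul hc h⟩

theorem trans : ProjEquiv Φ Ψ → ProjEquiv Ψ Θ → ProjEquiv Φ Θ :=
  fun ⟨g, c, hc, h⟩ ⟨g', c', hc', h'⟩ =>
    ⟨g * g', c * c', mul_ne_zero hc hc', substMat_mul_of_substMat_eq_smul h h'⟩

theorem irreducible_iff : ProjEquiv Φ Ψ → (Irreducible Φ ↔ Irreducible Ψ) := by
  rintro ⟨g, c, hc, h⟩
  rw [← irreducible_substMat_iff g, h, smul_eq_C_mul,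
    irreducible_isUnit_mul ((isUnit_iff_ne_zero.2 hc).map C)]

theorem of_eval [Infinite k] (M : Matrix (Fin 3) (Fin 3) k) (hM : M.det ≠ 0) {c : k} (hc : c ≠ 0)
    (h : ∀ v, eval (M.mulVec v) Φ = c * eval v Ψ) : ProjEquiv Φ Ψ := by
  refine ⟨Matrix.GeneralLinearGroup.mkOfDetNeZero M hM, c, hc, MvPolynomial.funext fun v => ?_⟩
  rw [eval_substMat, smul_eval, ← h]
  rfl

end ProjEquiv

end Substitution

section Hessian

/-- The Hessian determinant of a polynomial. -/
def hessian {σ R : Type*} [Fintype σ] [DecidableEq σ] [CommRing R] (Φ : MvPolynomial σ R) :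
    MvPolynomial σ R :=
  (Matrix.of fun i j => pderiv i (pderiv j Φ)).det

theorem hessian_smul {σ R : Type*} [Fintype σ] [DecidableEq σ] [CommRing R] (c : R)
    (Φ : MvPolynomial σ R) : hessian (c • Φ) = c ^ Fintype.card σ • hessian Φ := by
  have : (Matrix.of fun i j => pderiv i (pderiv j (c • Φ))) =
      (C c : MvPolynomial σ R) • Matrix.of fun i j => pderiv i (pderiv j Φ) := by
    ext1 i j
    simp [smul_eq_C_mul]
  rw [hessian, this, Matrix.det_smul, smul_eq_C_mul, C_pow, hessian]

theorem isHomogeneous_hessian {σ R : Type*} [Fintype σ] [DecidableEq σ] [CommRing R]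
    {Φ : MvPolynomial σ R} {n : ℕ} (hΦ : Φ.IsHomogeneous n) :
    (hessian Φ).IsHomogeneous ((n - 2) * Fintype.card σ) := by
  rw [hessian, Matrix.det_apply']
  refine IsHomogeneous.sum _ _ _ fun τ _ => ?_
  have hprod : (∏ i, pderiv (τ i) (pderiv i Φ)).IsHomogeneous (∑ _i : σ, (n - 2)) :=
    IsHomogeneous.prod _ _ _ fun i _ => hΦ.pderiv.pderiv
  rw [Finset.sum_const, Finset.card_univ, smul_eq_mul, mul_comm] at hprod
  simpa using hprod.C_mul ((Equiv.Perm.sign τ : ℤ) : R)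

theorem hessian_substMat {k : Type*} [Field k] (M : Matrix (Fin 3) (Fin 3) k)
    (Φ : MvPolynomial (Fin 3) k) :
    hessian (substMat M Φ) = M.det ^ 2 • substMat M (hessian Φ) := by
  have chain_rule : (Matrix.of fun i j => pderiv i (pderiv j (substMat M Φ))) =
      (M.map C).transpose *
        (substMat M).toRingHom.mapMatrix (Matrix.of fun i j => pderiv i (pderiv j Φ)) *
        M.map C := by
    ext1 i j
    simp only [Matrix.of_apply, pderiv_substMat, map_sum, Derivation.leibniz, smul_eq_mul,
      pderiv_C, Matrix.mul_apply, Matrix.map_apply, Matrix.transpose_apply,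
      RingHom.mapMatrix_apply, AlgHom.toRingHom_eq_coe, RingHom.coe_coe, mul_zero, add_zero]
    exact Finset.sum_congr rfl fun l _ => mul_comm _ _
  have det_map_C : (M.map (C (σ := Fin 3))).det = C M.det := (RingHom.map_det C M).symm
  rw [hessian, chain_rule, Matrix.det_mul, Matrix.det_mul, Matrix.det_transpose, det_map_C,
    ← RingHom.map_det, smul_eq_C_mul, C_pow, AlgHom.toRingHom_eq_coe, RingHom.coe_coe, ← hessian]
  ring

end Hessian

section TernaryCubic

/-- The ternary cubic form with the given coefficients at `x³, x²y, x²z, xy², xyz, xz², y³, y²z,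
yz², z³`, in this order. -/
def ternaryCubic {k : Type*} [CommRing k] (a b c d e f g h i j : k) : MvPolynomial (Fin 3) k :=
  C a * X 0 ^ 3 + C b * (X 0 ^ 2 * X 1) + C c * (X 0 ^ 2 * X 2) + C d * (X 0 * X 1 ^ 2)
  + C e * (X 0 * X 1 * X 2) + C f * (X 0 * X 2 ^ 2) + C g * X 1 ^ 3 + C h * (X 1 ^ 2 * X 2)
  + C i * (X 1 * X 2 ^ 2) + C j * X 2 ^ 3

section CommRing

variable {k : Type*} [CommRing k]

theorem C_mul_monomial_eq_ternaryCubic {p q s : ℕ} (hdeg : p + q + s = 3) (r : k) :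
    C r * (X 0 ^ p * X 1 ^ q * X 2 ^ s) =
      ternaryCubic (if p = 3 then r else 0) (if p = 2 ∧ q = 1 then r else 0)
        (if p = 2 ∧ s = 1 then r else 0) (if p = 1 ∧ q = 2 then r else 0)
        (if p = 1 ∧ q = 1 then r else 0) (if p = 1 ∧ s = 2 then r else 0)
        (if q = 3 then r else 0) (if q = 2 ∧ s = 1 then r else 0)
        (if q = 1 ∧ s = 2 then r else 0) (if s = 3 then r else 0) := by
  obtain rfl : s = 3 - p - q := by omega
  have hp : p ≤ 3 := by omega
  have hq : q ≤ 3 - p := by omega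
  interval_cases p <;> interval_cases q <;> simp [ternaryCubic]

theorem ternaryCubic_add (a b c d e f g h i j a' b' c' d' e' f' g' h' i' j' : k) :
    ternaryCubic a b c d e f g h i j + ternaryCubic a' b' c' d' e' f' g' h' i' j' =
      ternaryCubic (a + a') (b + b') (c + c') (d + d') (e + e') (f + f') (g + g') (h + h')
        (i + i') (j + j') := by
  simp only [ternaryCubic, C_add]
  ring

theorem smul_ternaryCubic (r a b c d e f g h i j : k) :
    r • ternaryCubic a b c d e f g h i j =
      ternaryCubic (r * a) (r * b) (r * c) (r * d) (r * e) (r * f) (r * g) (r * h) (r * i)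
        (r * j) := by
  simp only [ternaryCubic, C_mul, smul_eq_C_mul]
  ring

theorem exists_eq_ternaryCubic {Φ : MvPolynomial (Fin 3) k} (hΦ : Φ.IsHomogeneous 3) :
    ∃ a b c d e f g h i j, Φ = ternaryCubic a b c d e f g h i j := by
  rw [Φ.as_sum]
  refine Finset.sum_induction _
    (fun Ψ => ∃ a b c d e f g h i j, Ψ = ternaryCubic a b c d e f g h i j) ?_ ?_ fun m hm => ?_
  · rintro _ _ ⟨a, b, c, d, e, f, g, h, i, j, rfl⟩ ⟨a', b', c', d', e', f', g', h', i', j', rfl⟩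
    exact ⟨_, _, _, _, _, _, _, _, _, _, ternaryCubic_add ..⟩
  · exact ⟨0, 0, 0, 0, 0, 0, 0, 0, 0, 0, by simp [ternaryCubic]⟩
  · have hdeg : m 0 + m 1 + m 2 = 3 := by
      simpa [Finsupp.weight_apply, Finsupp.sum_fintype, Fin.sum_univ_three] using
        hΦ (mem_support_iff.1 hm)
    rw [monomial_eq, Finsupp.prod_fintype _ _ (by simp), Fin.prod_univ_three,
      C_mul_monomial_eq_ternaryCubic hdeg]
    exact ⟨_, _, _, _, _, _, _, _, _, _, rfl⟩

theorem eval_ternaryCubic (a b c d e f g h i j : k) (v : Fin 3 → k) :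
    eval v (ternaryCubic a b c d e f g h i j) =
      a * v 0 ^ 3 + b * (v 0 ^ 2 * v 1) + c * (v 0 ^ 2 * v 2) + d * (v 0 * v 1 ^ 2)
      + e * (v 0 * v 1 * v 2) + f * (v 0 * v 2 ^ 2) + g * v 1 ^ 3 + h * (v 1 ^ 2 * v 2)
      + i * (v 1 * v 2 ^ 2) + j * v 2 ^ 3 := by
  simp [ternaryCubic]

theorem isHomogeneous_ternaryCubic (a b c d e f g h i j : k) :
    (ternaryCubic a b c d e f g h i j).IsHomogeneous 3 := by
  have hX := isHomogeneous_X k (σ := Fin 3)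
  have hXpow (l : Fin 3) (n : ℕ) : (X l ^ n : MvPolynomial (Fin 3) k).IsHomogeneous n :=
    isHomogeneous_X_pow l n
  refine ((((((((((hXpow _ _).C_mul a).add ?_).add ?_).add ?_).add ?_).add ?_).add
    ((hXpow _ _).C_mul g)).add ?_).add ?_).add ((hXpow _ _).C_mul j) <;>
  refine IsHomogeneous.C_mul ?_ _
  · exact (hXpow _ _).mul (hX _)
  · exact (hXpow _ _).mul (hX _)
  · exact (hX _).mul (hXpow _ _)
  · exact ((hX _).mul (hX _)).mul (hX _)
  · exact (hX _).mul (hXpow _ _)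
  · exact (hXpow _ _).mul (hX _)
  · exact (hX _).mul (hXpow _ _)

theorem weierstrass_eq_ternaryCubic {k : Type*} [Field k] (a b : k) :
    weierstrass a b = ternaryCubic (-1) 0 0 0 0 (-a) 0 1 0 (-b) := by
  simp only [weierstrass, ternaryCubic, C_neg, C_1, C_0]
  ring

theorem isHomogeneous_weierstrass {k : Type*} [Field k] (a b : k) :
    (weierstrass a b).IsHomogeneous 3 := by
  rw [weierstrass_eq_ternaryCubic]
  exact isHomogeneous_ternaryCubic ..

theorem pderiv_ofNat {σ : Type*} (l : σ) (n : ℕ) [n.AtLeastTwo] :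
    pderiv l (ofNat(n) : MvPolynomial σ k) = 0 := by
  rw [← map_ofNat C n, pderiv_C]

theorem eval_single_one_hessian_ternaryCubic (a b c d e f g h i j : k) :
    eval (Pi.single 1 1) (hessian (ternaryCubic a b c d e f g h i j)) =
      6 * g * (4 * b * i - e ^ 2) - 8 * (b * h ^ 2 - d * e * h + d ^ 2 * i) := by
  rw [hessian, Matrix.det_fin_three]
  simp only [ternaryCubic, map_add, Derivation.leibniz, Derivation.leibniz_pow,
    Nat.add_one_sub_one, pderiv_X, Pi.single_apply, smul_eq_mul, mul_ite, mul_one, mul_zero,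
    smul_ite, nsmul_eq_mul, Nat.cast_ofNat, pderiv_C, add_zero, pow_one,
    Matrix.of_apply, ↓reduceIte, pderiv_ofNat, one_ne_zero, map_zero, zero_add, Fin.reduceEq,
    zero_ne_one, map_sub, map_mul, eval_C, eval_ofNat, eval_X]
  ring

end CommRing

section ChangeOfCoordinates

variable {k : Type*} [Field k] [Infinite k]

theorem projEquiv_ternaryCubic_changeXZ (a b c d e f g h i j : k) {p q r s : k}
    (hdet : p * s - q * r ≠ 0) :
    ProjEquiv (ternaryCubic a b c d e f g h i j)
      (ternaryCubic (a * p ^ 3 + c * p ^ 2 * r + f * p * r ^ 2 + j * r ^ 3)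
        (b * p ^ 2 + e * p * r + i * r ^ 2)
        (3 * a * p ^ 2 * q + c * (p ^ 2 * s + 2 * p * q * r) + f * (2 * p * r * s + q * r ^ 2)
          + 3 * j * r ^ 2 * s)
        (d * p + h * r)
        (2 * b * p * q + e * (p * s + q * r) + 2 * i * r * s)
        (3 * a * p * q ^ 2 + c * (q ^ 2 * r + 2 * p * q * s) + f * (2 * q * r * s + p * s ^ 2)
          + 3 * j * r * s ^ 2)
        g (d * q + h * s) (b * q ^ 2 + e * q * s + i * s ^ 2)
        (a * q ^ 3 + c * q ^ 2 * s + f * q * s ^ 2 + j * s ^ 3)) := by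
  refine .of_eval !![p, 0, q; 0, 1, 0; r, 0, s] ?_ one_ne_zero fun v => ?_
  · simpa [Matrix.det_fin_three] using hdet
  · simp only [eval_ternaryCubic, Matrix.mulVec, dotProduct, Fin.sum_univ_three, Matrix.of_apply,
      Matrix.cons_val', Matrix.cons_val_fin_one, Matrix.cons_val]
    ring

theorem projEquiv_ternaryCubic_shearY (a b c e f h i j u w : k) :
    ProjEquiv (ternaryCubic a b c 0 e f 0 h i j)
      (ternaryCubic (a + b * u) b (c + b * w + e * u + h * u ^ 2) 0 (e + 2 * h * u)
        (f + e * w + i * u + 2 * h * u * w) 0 h (i + 2 * h * w) (j + i * w + h * w ^ 2)) := by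
  refine .of_eval !![1, 0, 0; u, 1, w; 0, 0, 1] ?_ one_ne_zero fun v => ?_
  · simp [Matrix.det_fin_three]
  · simp only [eval_ternaryCubic, Matrix.mulVec, dotProduct, Fin.sum_univ_three, Matrix.of_apply,
      Matrix.cons_val', Matrix.cons_val_fin_one, Matrix.cons_val]
    ring

theorem projEquiv_ternaryCubic_swapYZ (a b c d e f g h i j : k) :
    ProjEquiv (ternaryCubic a b c d e f g h i j) (ternaryCubic a c b f e d j i h g) := by
  refine .of_eval !![1, 0, 0; 0, 0, 1; 0, 1, 0] ?_ one_ne_zero fun v => ?_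
  · simp [Matrix.det_fin_three]
  · simp only [eval_ternaryCubic, Matrix.mulVec, dotProduct, Fin.sum_univ_three, Matrix.of_apply,
      Matrix.cons_val', Matrix.cons_val_fin_one, Matrix.cons_val]
    ring

end ChangeOfCoordinates

end TernaryCubic

section ExistenceOfNormalForm

theorem not_irreducible_X_mul {σ R : Type*} [CommRing R] [Nontrivial R] (l : σ)
    {q : MvPolynomial σ R} (hq : constantCoeff q = 0) : ¬Irreducible (X l * q) := fun h =>
  (h.isUnit_or_isUnit rfl).elim
    (fun hX => not_isUnit_zero (constantCoeff_X (R := R) l ▸ hX.map constantCoeff))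
    fun hu => not_isUnit_zero (hq ▸ hu.map constantCoeff)

theorem exists_det_ne_zero_mulVec_single_eq {n k : Type*} [Fintype n] [DecidableEq n]
    [Field k] (i : n) {v : n → k} (hv : v ≠ 0) :
    ∃ M : Matrix n n k, M.det ≠ 0 ∧ M.mulVec (Pi.single i 1) = v := by
  obtain ⟨j, hj⟩ := Function.ne_iff.1 hv
  refine ⟨((1 : Matrix n n k).updateCol j v).submatrix id (Equiv.swap i j), ?_, ?_⟩
  · rw [Matrix.det_permute', ← Matrix.cramer_apply, Matrix.cramer_one]
    exact mul_ne_zero (by rw [Equiv.Perm.sign_swap']; split_ifs <;> simp) hj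
  · ext l
    simp

theorem exists_det_eq_one_of_ne_zero {k : Type*} [Field k] {p r : k} (h : p ≠ 0 ∨ r ≠ 0) :
    ∃ q s : k, p * s - q * r = 1 := by
  obtain ⟨s, q, hsq⟩ := Semifield.isCoprime_iff.2 h
  exact ⟨-q, s, by linear_combination hsq⟩

variable {k : Type*} [Field k]

theorem not_irreducible_ternaryCubic_of_X_zero_dvd (a b c d e f : k) :
    ¬Irreducible (ternaryCubic a b c d e f 0 0 0 0) := by
  have factor : ternaryCubic a b c d e f 0 0 0 0 = X 0 * (C a * X 0 ^ 2 + C b * (X 0 * X 1)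
      + C c * (X 0 * X 2) + C d * X 1 ^ 2 + C e * (X 1 * X 2) + C f * X 2 ^ 2) := by
    simp only [ternaryCubic, C_0]
    ring
  rw [factor]
  exact not_irreducible_X_mul _ (by simp)

theorem not_irreducible_ternaryCubic_of_X_two_dvd (c e f h i j : k) :
    ¬Irreducible (ternaryCubic 0 0 c 0 e f 0 h i j) := by
  have factor : ternaryCubic 0 0 c 0 e f 0 h i j = X 2 * (C c * X 0 ^ 2 + C e * (X 0 * X 1)
      + C f * (X 0 * X 2) + C h * X 1 ^ 2 + C i * (X 1 * X 2) + C j * X 2 ^ 2) := by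
    simp only [ternaryCubic, C_0]
    ring
  rw [factor]
  exact not_irreducible_X_mul _ (by simp)

theorem PlaneCubicsMeet.exists_binaryCubic_eq_zero (hk : PlaneCubicsMeet k) (a c f j : k) :
    ∃ p r : k, (p ≠ 0 ∨ r ≠ 0) ∧
      a * p ^ 3 + c * p ^ 2 * r + f * p * r ^ 2 + j * r ^ 3 = 0 := by
  obtain ⟨v, hv, hroot, hv1⟩ := hk _ _ (isHomogeneous_ternaryCubic a 0 c 0 0 f 0 0 0 j)
    (isHomogeneous_ternaryCubic 0 0 0 0 0 0 1 0 0 0)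
  simp only [eval_ternaryCubic, zero_mul, one_mul, add_zero, zero_add] at hroot hv1
  refine ⟨v 0, v 2, ?_, by linear_combination hroot⟩
  by_contra! h
  exact hv (funext (Fin.forall_fin_succ.2 ⟨h.1, Fin.forall_fin_two.2
    ⟨pow_eq_zero_iff three_ne_zero |>.1 hv1, h.2⟩⟩))

/-- A cubic form projectively equivalent to a Weierstrass normal form. -/
def HasWeierstrassForm (Φ : MvPolynomial (Fin 3) k) : Prop :=
  ∃ a b, ProjEquiv Φ (weierstrass a b)

theorem ProjEquiv.hasWeierstrassForm {Φ Ψ : MvPolynomial (Fin 3) k} (e : ProjEquiv Φ Ψ) :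
    HasWeierstrassForm Ψ → HasWeierstrassForm Φ := fun ⟨a, b, e'⟩ => ⟨a, b, e.trans e'⟩

variable [Infinite k]

theorem projEquiv_substMat (Φ : MvPolynomial (Fin 3) k) {M : Matrix (Fin 3) (Fin 3) k}
    (hM : M.det ≠ 0) : ProjEquiv Φ (substMat M Φ) :=
  .of_eval M hM one_ne_zero fun v => by rw [eval_substMat, one_mul]

theorem not_irreducible_ternaryCubic_of_cone (hk : PlaneCubicsMeet k) (a c f j : k) :
    ¬Irreducible (ternaryCubic a 0 c 0 0 f 0 0 0 j) := by
  obtain ⟨p, r, hpr, hroot⟩ := hk.exists_binaryCubic_eq_zero a c f j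
  obtain ⟨q, s, hdet⟩ := exists_det_eq_one_of_ne_zero hpr
  have e := projEquiv_ternaryCubic_changeXZ a 0 c 0 0 f 0 0 0 j (hdet.trans_ne one_ne_zero)
  simp only [hroot, zero_mul, mul_zero, add_zero] at e
  rw [e.irreducible_iff]
  exact not_irreducible_ternaryCubic_of_X_two_dvd _ _ _ _ _ _

theorem hasWeierstrassForm_ternaryCubic_short {a h : k} (ha : a ≠ 0) (hh : h ≠ 0) (f j : k) :
    HasWeierstrassForm (ternaryCubic a 0 0 0 0 f 0 h 0 j) := by
  refine ⟨f * a / h ^ 2, -(j * a ^ 2 / h ^ 3), .of_eval (Matrix.diagonal ![1, 1, -a / h]) ?_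
    (neg_ne_zero.2 ha) fun v => ?_⟩
  · simp [Matrix.det_diagonal, Fin.prod_univ_three, ha, hh]
  · simp only [weierstrass_eq_ternaryCubic, eval_ternaryCubic, Matrix.mulVec_diagonal,
      Matrix.cons_val]
    field_simp
    ring

variable [NeZero (2 : k)]

theorem exists_projEquiv_ternaryCubic_of_double_point (a c f j : k) {b e i : k}
    (hQ : ¬(b = 0 ∧ e = 0 ∧ i = 0)) :
    ∃ A β B, ProjEquiv (ternaryCubic a b c 0 e f 0 0 i j) (ternaryCubic 0 1 0 0 0 A 0 0 β B) := by
  obtain ⟨p, r, hN⟩ : ∃ p r, b * p ^ 2 + e * p * r + i * r ^ 2 ≠ 0 := by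
    by_contra! h
    have hb : b = 0 := by simpa using h 1 0
    have hi : i = 0 := by simpa using h 0 1
    exact hQ ⟨hb, by simpa [hb, hi] using h 1 1, hi⟩
  have hdet : p * (2 * b * p + e * r) - -(e * p + 2 * i * r) * r ≠ 0 := by
    convert mul_ne_zero (two_ne_zero' k) hN using 1
    ring
  have diagonalize := projEquiv_ternaryCubic_changeXZ a b c 0 e f 0 0 i j hdet
  have he : 2 * b * p * -(e * p + 2 * i * r) + e * (p * (2 * b * p + e * r) +
      -(e * p + 2 * i * r) * r) + 2 * i * r * (2 * b * p + e * r) = 0 := by ring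
  rw [he] at diagonalize
  simp only [zero_mul, add_zero] at diagonalize
  generalize b * p ^ 2 + e * p * r + i * r ^ 2 = N at hN diagonalize
  have shear (a c f i j : k) := projEquiv_ternaryCubic_shearY a N c 0 f 0 i j (-a / N) (-c / N)
  have hcancel (x : k) : x + N * (-x / N) = 0 := by rw [mul_div_cancel₀ _ hN, add_neg_cancel]
  simp only [hcancel, mul_zero, zero_mul, add_zero] at shear
  have scale (f i j : k) : ProjEquiv (ternaryCubic 0 N 0 0 0 f 0 0 i j)
      (ternaryCubic 0 1 0 0 0 (f / N) 0 0 (i / N) (j / N)) :=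
    .of_eval 1 (by simp) hN fun v => by
      simp only [Matrix.one_mulVec, eval_ternaryCubic]
      field_simp
      ring
  exact ⟨_, _, _, (diagonalize.trans (shear _ _ _ _ _)).trans (scale _ _ _)⟩

variable [NeZero (3 : k)]

theorem hasWeierstrassForm_ternaryCubic_long {a h : k} (ha : a ≠ 0) (hh : h ≠ 0) (c e f i j : k) :
    HasWeierstrassForm (ternaryCubic a 0 c 0 e f 0 h i j) := by
  have completeSquare :=
    projEquiv_ternaryCubic_shearY a 0 c e f h i j (-e / (2 * h)) (-i / (2 * h))
  have hcancel (x : k) : x + 2 * h * (-x / (2 * h)) = 0 := by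
    rw [mul_div_cancel₀ _ (mul_ne_zero two_ne_zero hh), add_neg_cancel]
  simp only [hcancel, zero_mul, add_zero] at completeSquare
  refine completeSquare.hasWeierstrassForm ?_
  have completeCube (c f j : k) := projEquiv_ternaryCubic_changeXZ a 0 c 0 0 f 0 h 0 j
    (p := 1) (q := -c / (3 * a)) (r := 0) (s := 1) (by simp)
  have hcancel' (c : k) : 3 * a * (-c / (3 * a)) + c = 0 := by
    rw [mul_div_cancel₀ _ (mul_ne_zero three_ne_zero ha), neg_add_cancel]
  simp only [one_pow, mul_one, mul_zero, add_zero, zero_mul, zero_add, ne_eq, OfNat.ofNat_ne_zero,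
    not_false_eq_true, zero_pow, hcancel'] at completeCube
  exact (completeCube _ _ _).hasWeierstrassForm
    (hasWeierstrassForm_ternaryCubic_short ha hh _ _)

theorem hasWeierstrassForm_of_flex {a c e f h i j : k} (hh : h ≠ 0)
    (hirr : Irreducible (ternaryCubic a 0 c 0 e f 0 h i j)) :
    HasWeierstrassForm (ternaryCubic a 0 c 0 e f 0 h i j) := by
  refine hasWeierstrassForm_ternaryCubic_long (fun ha => ?_) hh _ _ _ _ _
  rw [ha] at hirr
  exact not_irreducible_ternaryCubic_of_X_two_dvd _ _ _ _ _ _ hirr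

theorem hasWeierstrassForm_of_smooth_flex {a b c d e f h i j : k} (hsmooth : d ≠ 0 ∨ h ≠ 0)
    (hflex : b * h ^ 2 - d * e * h + d ^ 2 * i = 0)
    (hirr : Irreducible (ternaryCubic a b c d e f 0 h i j)) :
    HasWeierstrassForm (ternaryCubic a b c d e f 0 h i j) := by
  obtain ⟨q, s, hdet⟩ := exists_det_eq_one_of_ne_zero (p := h) (r := -d)
    (hsmooth.symm.imp_right neg_ne_zero.2)
  have straighten := projEquiv_ternaryCubic_changeXZ a b c d e f 0 h i j
    (hdet.trans_ne one_ne_zero)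
  have hb : b * h ^ 2 + e * h * -d + i * (-d) ^ 2 = 0 := by linear_combination hflex
  have hd : d * h + h * -d = 0 := by ring
  have hh : d * q + h * s = 1 := by linear_combination hdet
  rw [hb, hd, hh] at straighten
  exact straighten.hasWeierstrassForm
    (hasWeierstrassForm_of_flex one_ne_zero (straighten.irreducible_iff.1 hirr))

end ExistenceOfNormalForm

section DoublePoint

theorem exists_mul_eq_of_mul_eq_mul {k : Type*} [Field k] {u v A B : k}
    (huv : u ≠ 0 ∨ v ≠ 0) (h : A * v = B * u) : ∃ l : k, l * u = A ∧ l * v = B := by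
  rcases huv with hu | hv
  · exact ⟨A / u, div_mul_cancel₀ _ hu, by
      rw [div_mul_eq_mul_div, h, mul_div_cancel_right₀ _ hu]⟩
  · exact ⟨B / v, by
      rw [div_mul_eq_mul_div, ← h, mul_div_cancel_right₀ _ hv], div_mul_cancel₀ _ hv⟩

variable {k : Type*} [Field k] [NeZero (2 : k)] [NeZero (3 : k)]

-- Modulo `x² + βz²`, the cube of `p x + r z` is `(3pr² - βp³) x z² + (r³ - 3βp²r) z³`.
theorem PlaneCubicsMeet.exists_cube_eq (hk : PlaneCubicsMeet k) (A : k) {β B : k}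
    (hβB : β ≠ 0 ∨ B ≠ 0) :
    ∃ p r l : k, (p ≠ 0 ∨ r ≠ 0) ∧
      l * (3 * p * r ^ 2 - β * p ^ 3) = A ∧ l * (r ^ 3 - 3 * β * p ^ 2 * r) = B := by
  suffices ∃ p r : k, (p ≠ 0 ∨ r ≠ 0) ∧
      (3 * p * r ^ 2 - β * p ^ 3 ≠ 0 ∨ r ^ 3 - 3 * β * p ^ 2 * r ≠ 0) ∧
      A * (r ^ 3 - 3 * β * p ^ 2 * r) = B * (3 * p * r ^ 2 - β * p ^ 3) by
    obtain ⟨p, r, hpr, hcube, hprop⟩ := this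
    obtain ⟨l, hl⟩ := exists_mul_eq_of_mul_eq_mul hcube hprop
    exact ⟨p, r, l, hpr, hl⟩
  rcases eq_or_ne β 0 with rfl | hβ
  · have hB : 3 * B ≠ 0 := mul_ne_zero three_ne_zero (hβB.resolve_left (not_not_intro rfl))
    exact ⟨A, 3 * B, .inr hB, .inr (by simpa using hB), by ring⟩
  · obtain ⟨p, r, hpr, hroot⟩ :=
      hk.exists_binaryCubic_eq_zero (B * β) (-3 * A * β) (-3 * B) A
    refine ⟨p, r, hpr, ?_, by linear_combination hroot⟩
    by_contra! h
    have hp : (2 ^ 3 * β ^ 2) * p ^ 5 = 0 := by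
      linear_combination (3 * r ^ 2 - 8 * β * p ^ 2) * h.1 - 9 * p * r * h.2
    have hp0 : p = 0 := by simpa [hβ, two_ne_zero' k] using hp
    have hr0 : r = 0 := by simpa [hp0] using h.2
    simp [hp0, hr0] at hpr

variable [Infinite k]

theorem hasWeierstrassForm_of_nodal_normal_form (hk : PlaneCubicsMeet k) {A β B : k}
    (hirr : Irreducible (ternaryCubic 0 1 0 0 0 A 0 0 β B)) :
    HasWeierstrassForm (ternaryCubic 0 1 0 0 0 A 0 0 β B) := by
  have hβB : β ≠ 0 ∨ B ≠ 0 := by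
    by_contra! h
    rw [h.1, h.2] at hirr
    exact not_irreducible_ternaryCubic_of_X_zero_dvd _ _ _ _ _ _ hirr
  obtain ⟨p, r, l, hpr, hA, hB⟩ := hk.exists_cube_eq A hβB
  have shear := projEquiv_ternaryCubic_shearY 0 1 0 0 A 0 β B (l * p ^ 3) (3 * l * p ^ 2 * r)
  have hxz : A + β * (l * p ^ 3) = 3 * l * p * r ^ 2 := by linear_combination -hA
  have hz : B + β * (3 * l * p ^ 2 * r) = l * r ^ 3 := by linear_combination -hB
  simp only [zero_add, one_mul, mul_zero, zero_mul, add_zero, hxz, hz] at shear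
  obtain ⟨P, R, hdet⟩ := exists_det_eq_one_of_ne_zero hpr
  have rotate : ProjEquiv
      (ternaryCubic (l * p ^ 3) 1 (3 * l * p ^ 2 * r) 0 0 (3 * l * p * r ^ 2) 0 0 β (l * r ^ 3))
      (ternaryCubic l (R ^ 2 + β * P ^ 2) 0 0 (-2 * (R * r + β * P * p)) 0 0 0
        (r ^ 2 + β * p ^ 2) 0) := by
    convert projEquiv_ternaryCubic_changeXZ (l * p ^ 3) 1 (3 * l * p ^ 2 * r) 0 0
      (3 * l * p * r ^ 2) 0 0 β (l * r ^ 3) (p := R) (q := -r) (r := -P) (s := p)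
      (ne_of_eq_of_ne (by linear_combination hdet) one_ne_zero) using 2
    case e'_3 => linear_combination -l * ((p * R - P * r) ^ 2 + (p * R - P * r) + 1) * hdet
    all_goals ring
  have toFlex := (shear.trans rotate).trans (projEquiv_ternaryCubic_swapYZ _ _ _ _ _ _ _ _ _ _)
  have hirr' := toFlex.irreducible_iff.1 hirr
  refine toFlex.hasWeierstrassForm (hasWeierstrassForm_of_flex (fun h0 => ?_) hirr')
  rw [h0] at hirr'
  exact not_irreducible_ternaryCubic_of_X_zero_dvd _ _ _ _ _ _ hirr'

theorem hasWeierstrassForm_of_double_point (hk : PlaneCubicsMeet k) {a b c e f i j : k}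
    (hirr : Irreducible (ternaryCubic a b c 0 e f 0 0 i j)) :
    HasWeierstrassForm (ternaryCubic a b c 0 e f 0 0 i j) := by
  by_cases hQ : b = 0 ∧ e = 0 ∧ i = 0
  · obtain ⟨rfl, rfl, rfl⟩ := hQ
    exact absurd hirr (not_irreducible_ternaryCubic_of_cone hk a c f j)
  · obtain ⟨A, β, B, normalize⟩ := exists_projEquiv_ternaryCubic_of_double_point a c f j hQ
    exact normalize.hasWeierstrassForm
      (hasWeierstrassForm_of_nodal_normal_form hk (normalize.irreducible_iff.1 hirr))

end DoublePoint

section Existence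

variable {k : Type*} [Field k] [NeZero (2 : k)] [NeZero (3 : k)] [Infinite k]

theorem hasWeierstrassForm_of_irreducible (hk : PlaneCubicsMeet k) {Φ : MvPolynomial (Fin 3) k}
    (hΦ : Φ.IsHomogeneous 3) (hirr : Irreducible Φ) : HasWeierstrassForm Φ := by
  obtain ⟨v, hv, hcurve, hflex⟩ := hk Φ (hessian Φ) hΦ (isHomogeneous_hessian hΦ)
  obtain ⟨M, hM, rfl⟩ := exists_det_ne_zero_mulVec_single_eq 1 hv
  have move := projEquiv_substMat Φ hM
  refine move.hasWeierstrassForm ?_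
  have hirr' := move.irreducible_iff.1 hirr
  have hhess := congrArg (eval (Pi.single 1 1)) (hessian_substMat M Φ)
  rw [smul_eval, eval_substMat, hflex, mul_zero] at hhess
  rw [← eval_substMat] at hcurve
  obtain ⟨a, b, c, d, e, f, g, h, i, j, hΨ⟩ :=
    exists_eq_ternaryCubic (isHomogeneous_substMat M hΦ)
  rw [hΨ] at hirr' hcurve hhess ⊢
  obtain rfl : g = 0 := by simpa [eval_ternaryCubic] using hcurve
  by_cases hsmooth : d ≠ 0 ∨ h ≠ 0
  · refine hasWeierstrassForm_of_smooth_flex hsmooth ?_ hirr'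
    rw [eval_single_one_hessian_ternaryCubic] at hhess
    have h8 : (2 : k) ^ 3 * (b * h ^ 2 - d * e * h + d ^ 2 * i) = 0 := by
      linear_combination -hhess
    exact (mul_eq_zero.1 h8).resolve_left (pow_ne_zero _ two_ne_zero)
  · obtain ⟨rfl, rfl⟩ : d = 0 ∧ h = 0 := by simpa using hsmooth
    exact hasWeierstrassForm_of_double_point hk hirr'

end Existence

section Irreducibility

variable {k : Type*} [Field k]

-- In `k[y, z][x]`, the polynomial `x³ + a z² x + (b z³ - y² z)` is Eisenstein at `z`.
theorem irreducible_weierstrass (a b : k) : Irreducible (weierstrass a b) := by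
  let E : Cubic (MvPolynomial (Fin 2) k) :=
    ⟨1, 0, C a * X 1 ^ 2, X 1 * (C b * X 1 ^ 2 - X 0 ^ 2)⟩
  have finSuccEquiv_weierstrass : finSuccEquiv k 2 (-weierstrass a b) = E.toPoly := by
    have map_C (r : k) : finSuccEquiv k 2 (C r) = Polynomial.C (C r) :=
      (finSuccEquiv k 2).commutes r
    have map_X_one : finSuccEquiv k 2 (X 1) = Polynomial.C (X 0) := finSuccEquiv_X_succ (j := 0)
    have map_X_two : finSuccEquiv k 2 (X 2) = Polynomial.C (X 1) := finSuccEquiv_X_succ (j := 1)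
    simp only [weierstrass, map_neg, map_sub, map_mul, map_pow, finSuccEquiv_X_zero, map_X_one,
      map_X_two, map_C, Cubic.toPoly, E, map_zero, map_one]
    ring
  have hmonic : E.toPoly.Monic := Cubic.monic_of_a_eq_one rfl
  have hdeg : E.toPoly.natDegree = 3 := Cubic.natDegree_of_a_ne_zero one_ne_zero
  have hprime : (Ideal.span {(X 1 : MvPolynomial (Fin 2) k)}).IsPrime :=
    (Ideal.span_singleton_prime (X_ne_zero 1)).2 X_prime
  have heisenstein : E.toPoly.IsEisensteinAt (Ideal.span {X 1}) := by
    refine hmonic.isEisensteinAt_of_mem_of_notMem hprime.ne_top (fun {n} hn => ?_) ?_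
    · rw [hdeg] at hn
      rw [Ideal.mem_span_singleton]
      interval_cases n
      · rw [Cubic.coeff_eq_d]
        exact dvd_mul_right _ _
      · rw [Cubic.coeff_eq_c]
        exact dvd_mul_of_dvd_right (dvd_pow_self _ two_ne_zero) _
      · rw [Cubic.coeff_eq_b]
        exact dvd_zero _
    · rw [Cubic.coeff_eq_d, Ideal.span_singleton_pow, Ideal.mem_span_singleton, sq,
        mul_dvd_mul_iff_left (X_ne_zero 1)]
      intro hdvd
      simpa using map_dvd (eval ![1, 0]) hdvd
  rw [← (Associated.neg_left (.refl (weierstrass a b))).irreducible_iff,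
    ← MulEquiv.irreducible_iff (finSuccEquiv k 2), finSuccEquiv_weierstrass]
  exact heisenstein.irreducible hprime hmonic.isPrimitive (hdeg ▸ three_pos)

end Irreducibility

section Uniqueness

section CommRing

variable {k : Type*} [CommRing k]

theorem hessian_ternaryCubic_of_even (a c d f h j : k) :
    hessian (ternaryCubic a 0 c d 0 f 0 h 0 j) =
      ternaryCubic (8 * (3 * a * d * f - d * c ^ 2)) 0
        (8 * (9 * a * d * j + 3 * a * h * f - c * d * f - h * c ^ 2))
        (8 * (-3 * a * h ^ 2 - d ^ 2 * f + 2 * c * d * h)) 0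
        (8 * (9 * a * h * j + 3 * c * d * j - h * c * f - d * f ^ 2)) 0
        (8 * (-c * h ^ 2 - 3 * d ^ 2 * j + 2 * d * h * f)) 0
        (8 * (3 * c * h * j - h * f ^ 2)) := by
  rw [hessian, Matrix.det_fin_three]
  simp only [ternaryCubic, zero_mul, add_zero, map_add, Derivation.leibniz,
    Derivation.leibniz_pow, Nat.add_one_sub_one, pderiv_X, Pi.single_apply, smul_eq_mul, mul_ite,
    mul_one, mul_zero, smul_ite, nsmul_eq_mul, Nat.cast_ofNat, pderiv_C, pow_one,
    Matrix.of_apply, ↓reduceIte, pderiv_ofNat, Fin.reduceEq, map_zero, zero_add, one_ne_zero,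
    zero_ne_one, C_mul, C_sub, C_pow, C_neg, map_ofNat C]
  ring

end CommRing

variable {k : Type*} [Field k]

theorem hessian_weierstrass (a b : k) : hessian (weierstrass a b) =
    ternaryCubic 0 0 (24 * a) 24 0 (72 * b) 0 0 0 (-8 * a ^ 2) := by
  rw [weierstrass_eq_ternaryCubic, hessian_ternaryCubic_of_even]
  congr 1 <;> ring

theorem hessian_weierstrass_add_smul_hessian (a b n : k) :
    hessian (weierstrass a b + n • hessian (weierstrass a b)) =
      (-576 * a * n + 41472 * b * n ^ 2 + 110592 * a ^ 2 * n ^ 3) • weierstrass a b +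
        (1 + 576 * a * n ^ 2 - 13824 * b * n ^ 3) • hessian (weierstrass a b) := by
  rw [hessian_weierstrass, weierstrass_eq_ternaryCubic, smul_ternaryCubic, smul_ternaryCubic,
    smul_ternaryCubic, ternaryCubic_add, ternaryCubic_add]
  simp only [mul_zero, add_zero]
  rw [hessian_ternaryCubic_of_even]
  congr 1 <;> ring

/-- The covariance of the Hessian, applied to the whole pencil `W + n H`, compares the coefficients
of `W` in the Hessians of corresponding members. -/
theorem hessian_pencil_coeff_eq {a b a' b' c : k} {M : Matrix (Fin 3) (Fin 3) k} (hM : M.det ≠ 0)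
    (h : substMat M (weierstrass a b) = c • weierstrass a' b') (m : k) :
    c ^ 3 * (-576 * a' * (m * c ^ 2) + 41472 * b' * (m * c ^ 2) ^ 2
        + 110592 * a' ^ 2 * (m * c ^ 2) ^ 3) =
      M.det ^ 2 * c * (-576 * a * (m * M.det ^ 2) + 41472 * b * (m * M.det ^ 2) ^ 2
        + 110592 * a ^ 2 * (m * M.det ^ 2) ^ 3) := by
  have hhess : M.det ^ 2 • substMat M (hessian (weierstrass a b)) =
      c ^ 3 • hessian (weierstrass a' b') := by
    rw [← hessian_substMat, h, hessian_smul, Fintype.card_fin]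
  have hpencil : substMat M (weierstrass a b + (m * M.det ^ 2) • hessian (weierstrass a b)) =
      c • (weierstrass a' b' + (m * c ^ 2) • hessian (weierstrass a' b')) := by
    rw [map_add, map_smul, h, mul_smul, hhess, smul_add, smul_smul, smul_smul]
    congr 2
    ring
  have hcov := hessian_substMat M (weierstrass a b + (m * M.det ^ 2) • hessian (weierstrass a b))
  rw [hpencil, hessian_smul, hessian_weierstrass_add_smul_hessian,
    hessian_weierstrass_add_smul_hessian, map_add, map_smul, map_smul, h] at hcov
  have eval_weierstrass (a b : k) : eval (Pi.single 0 1) (weierstrass a b) = -1 := by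
    simp [weierstrass_eq_ternaryCubic, eval_ternaryCubic]
  have eval_hessian (a b : k) : eval (Pi.single 0 1) (hessian (weierstrass a b)) = 0 := by
    simp [hessian_weierstrass, eval_ternaryCubic]
  have eval_substMat_hessian :
      eval (Pi.single 0 1) (substMat M (hessian (weierstrass a b))) = 0 := by
    have := congrArg (eval (Pi.single 0 1)) hhess
    rw [smul_eval, smul_eval, eval_hessian, mul_zero] at this
    exact (mul_eq_zero.1 this).resolve_left (pow_ne_zero _ hM)
  have heval := congrArg (eval (Pi.single 0 1)) hcov
  simp only [smul_eval, map_add, eval_weierstrass, eval_hessian, eval_substMat_hessian,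
    Fintype.card_fin] at heval
  linear_combination -heval

theorem exists_eq_pow_mul_of_projEquiv_weierstrass [NeZero (2 : k)] [NeZero (3 : k)]
    {a b a' b' : k} :
    ProjEquiv (weierstrass a b) (weierstrass a' b') →
      ∃ t : k, t ≠ 0 ∧ a' = t ^ 4 * a ∧ b' = t ^ 6 * b := by
  rintro ⟨g, c, hc, h⟩
  have hdet : (g : Matrix (Fin 3) (Fin 3) k).det ≠ 0 := g.det_ne_zero
  have key := hessian_pencil_coeff_eq hdet h
  have hunit (p q : ℕ) : (2 : k) ^ p * 3 ^ q * c ≠ 0 :=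
    mul_ne_zero (mul_ne_zero (pow_ne_zero _ two_ne_zero) (pow_ne_zero _ three_ne_zero)) hc
  generalize (g : Matrix (Fin 3) (Fin 3) k).det = d at hdet key
  have hb : c ^ 6 * b' = d ^ 6 * b :=
    mul_left_cancel₀ (hunit 10 4) (by linear_combination key 1 + key (-1))
  have ha : c ^ 4 * a' = d ^ 4 * a :=
    mul_left_cancel₀ (hunit 7 3)
      (by linear_combination key 2 - 8 * key 1 + 165888 * c * hb)
  refine ⟨d / c, div_ne_zero hdet hc, ?_, ?_⟩
  · rw [div_pow, div_mul_eq_mul_div, eq_div_iff (pow_ne_zero _ hc), ← ha, mul_comm]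
  · rw [div_pow, div_mul_eq_mul_div, eq_div_iff (pow_ne_zero _ hc), ← hb, mul_comm]

end Uniqueness

section Stabilizer

theorem finite_setOf_smul_mem {G α : Type*} [Group G] [MulAction G α] {x : α}
    (hx : (MulAction.stabilizer G x : Set G).Finite) {s : Set α} (hs : s.Finite) :
    {g : G | g • x ∈ s}.Finite := by
  refine hs.preimage' (f := fun g : G => g • x) fun y _ => ?_
  obtain hempty | ⟨g₀, rfl : g₀ • x = y⟩ := ((fun g : G => g • x) ⁻¹' {y}).eq_empty_or_nonempty
  · rw [hempty]
    exact Set.finite_empty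
  · refine (hx.image (g₀ * ·)).subset fun g (hg : g • x = g₀ • x) => ⟨g₀⁻¹ * g, ?_, ?_⟩
    · rw [SetLike.mem_coe, MulAction.mem_stabilizer_iff, mul_smul, hg, inv_smul_smul]
    · exact mul_inv_cancel_left g₀ g

variable {k : Type*} [Field k]

/-- The group of invertible linear substitutions preserving the curve `Ψ = 0`; `projStabilizer Ψ`
is its image in `PGL₃`. -/
def linearStabilizer (Ψ : MvPolynomial (Fin 3) k) : Subgroup (GL (Fin 3) k) where
  carrier := {g | ∃ c : k, c ≠ 0 ∧ substMat ↑g Ψ = c • Ψ}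
  one_mem' := ⟨1, one_ne_zero, by rw [Units.val_one, substMat_one, one_smul]⟩
  mul_mem' := fun ⟨c, hc, h⟩ ⟨c', hc', h'⟩ =>
    ⟨c * c', mul_ne_zero hc hc', substMat_mul_of_substMat_eq_smul h h'⟩
  inv_mem' := fun ⟨c, hc, h⟩ => ⟨c⁻¹, inv_ne_zero hc, substMat_inv_of_substMat_eq_smul hc h⟩

theorem linearStabilizer_le_linearStabilizer_hessian (Ψ : MvPolynomial (Fin 3) k) :
    linearStabilizer Ψ ≤ linearStabilizer (hessian Ψ) := by
  rintro g ⟨c, hc, h⟩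
  have hdet : (g : Matrix (Fin 3) (Fin 3) k).det ^ 2 ≠ 0 := pow_ne_zero _ g.det_ne_zero
  refine ⟨((g : Matrix (Fin 3) (Fin 3) k).det ^ 2)⁻¹ * c ^ 3,
    mul_ne_zero (inv_ne_zero hdet) (pow_ne_zero _ hc), ?_⟩
  rw [mul_smul, eq_inv_smul_iff₀ hdet, ← hessian_substMat, h, hessian_smul, Fintype.card_fin]

theorem eval_smul_eq_zero_of_mem_linearStabilizer {Ψ : MvPolynomial (Fin 3) k} {g : GL (Fin 3) k}
    (hg : g ∈ linearStabilizer Ψ) {v : Fin 3 → k} (hv : eval v Ψ = 0) : eval (g • v) Ψ = 0 := by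
  obtain ⟨c, -, h⟩ := hg
  rw [Units.smul_def, Matrix.smul_eq_mulVec, ← eval_substMat, h, smul_eval, hv, mul_zero]

theorem scalar_smul_eq {n R : Type*} [Fintype n] [DecidableEq n] [CommRing R] (r : Rˣ)
    (v : n → R) : Matrix.GeneralLinearGroup.scalar n r • v = r • v := by
  rw [Units.smul_def, Matrix.GeneralLinearGroup.coe_scalar, Matrix.scalar_apply,
    Matrix.smul_eq_mulVec, ← Matrix.smul_one_eq_diagonal, Matrix.smul_mulVec, Matrix.one_mulVec,
    Units.smul_def]

theorem scalar_mem_linearStabilizer [Infinite k] {Ψ : MvPolynomial (Fin 3) k} {n : ℕ}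
    (hΨ : Ψ.IsHomogeneous n) (r : kˣ) :
    Matrix.GeneralLinearGroup.scalar (Fin 3) r ∈ linearStabilizer Ψ := by
  refine ⟨r ^ n, pow_ne_zero _ r.ne_zero, MvPolynomial.funext fun v => ?_⟩
  rw [eval_substMat, ← Matrix.smul_eq_mulVec, ← Units.smul_def, scalar_smul_eq, Units.smul_def,
    eval_smul_of_isHomogeneous hΨ, smul_eval]

section Torus

/-- The torus of matrices `diag(p, 1, p³)`, which acts on Weierstrass cubics by
`(a, b) ↦ (p⁴a, p⁶b)`. -/
def weierstrassTorus : kˣ →* GL (Fin 3) k :=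
  Units.map
    { toFun := fun p => Matrix.diagonal ![p, 1, p ^ 3]
      map_one' := by
        rw [one_pow, ← Matrix.diagonal_one]
        congr 1
        ext i
        fin_cases i <;> rfl
      map_mul' := fun p q => by
        rw [Matrix.diagonal_mul_diagonal, mul_pow]
        congr 1
        ext i
        fin_cases i <;> simp }

theorem coe_weierstrassTorus (p : kˣ) :
    (weierstrassTorus p : Matrix (Fin 3) (Fin 3) k) = Matrix.diagonal ![(p : k), 1, (p : k) ^ 3] :=
  rfl

theorem substMat_weierstrassTorus (p : kˣ) (a b : k) :
    substMat ↑(weierstrassTorus p) (weierstrass a b) =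
      (p : k) ^ 3 • weierstrass ((p : k) ^ 4 * a) ((p : k) ^ 6 * b) := by
  have substMat_X (i : Fin 3) :
      substMat ↑(weierstrassTorus p) (X i) = C (![(p : k), 1, (p : k) ^ 3] i) * X i := by
    simp [substMat, coe_weierstrassTorus, Matrix.diagonal_apply, apply_ite (C (σ := Fin 3))]
  simp only [weierstrass, map_sub, map_mul, map_pow, substMat_X, algHom_C, algebraMap_eq,
    smul_eq_C_mul, Matrix.cons_val, map_one]
  ring

theorem injective_mk_comp_weierstrassTorus : Function.Injective
    ((QuotientGroup.mk' (Subgroup.center (GL (Fin 3) k))).comp weierstrassTorus) := by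
  refine (injective_iff_map_eq_one _).2 fun p hp => ?_
  rw [MonoidHom.comp_apply, QuotientGroup.mk'_apply, QuotientGroup.eq_one_iff,
    Matrix.GeneralLinearGroup.mem_center_iff_val_mem_range_scalar, coe_weierstrassTorus] at hp
  obtain ⟨r, hr⟩ := hp
  have entry (i : Fin 3) : r = ![(p : k), 1, (p : k) ^ 3] i := by
    simpa using congrFun₂ hr i i
  exact Units.ext ((entry 0).symm.trans (entry 1))

theorem infinite_projStabilizer_weierstrass_zero_zero [Infinite k] :
    (projStabilizer (weierstrass (0 : k) 0)).Infinite := by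
  have : Infinite kˣ :=
    unitsEquivNeZero.infinite_iff.2 (Set.finite_singleton 0).infinite_compl.to_subtype
  refine (Set.infinite_range_of_injective injective_mk_comp_weierstrassTorus).mono ?_
  rintro _ ⟨p, rfl⟩
  refine ⟨weierstrassTorus p, ⟨(p : k) ^ 3, pow_ne_zero _ p.ne_zero, ?_⟩, rfl⟩
  rw [substMat_weierstrassTorus, mul_zero, mul_zero]

end Torus

section Flexes

/-- Representatives of the inflection points of the Weierstrass cubic, which are its intersections
with its Hessian curve: the point at infinity `(0 : 1 : 0)` and the points `(x : y : 1)`. -/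
def weierstrassFlexes (a b : k) : Set (Fin 3 → k) :=
  insert (Pi.single 1 1)
    {v | v 2 = 1 ∧ eval v (weierstrass a b) = 0 ∧ eval v (hessian (weierstrass a b)) = 0}

theorem finite_weierstrassFlexes [NeZero (2 : k)] [NeZero (3 : k)] (a b : k) :
    (weierstrassFlexes a b).Finite := by
  refine Set.Finite.insert _ ?_
  let P : Polynomial k := .C 3 * .X ^ 4 + .C (6 * a) * .X ^ 2 + .C (12 * b) * .X + .C (-a ^ 2)
  have hP : P ≠ 0 := fun h => three_ne_zero (α := k) <| by
    simpa [P, Polynomial.coeff_X, Polynomial.coeff_C, -map_mul, -map_pow, -map_neg]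
      using congrArg (Polynomial.coeff · 4) h
  have finite_sqrt (r : k) : {y : k | y ^ 2 = r}.Finite := by
    convert Polynomial.finite_setOfPred_isRoot (Polynomial.X_pow_sub_C_ne_zero two_pos r) using 3
    simp [Polynomial.IsRoot, sub_eq_zero]
  refine ((Polynomial.finite_setOfPred_isRoot hP).biUnion fun x _ =>
    (finite_sqrt (x ^ 3 + a * x + b)).image fun y => ![x, y, 1]).subset ?_
  rintro v ⟨hz, hW, hH⟩
  rw [weierstrass_eq_ternaryCubic, eval_ternaryCubic, hz] at hW
  rw [hessian_weierstrass, eval_ternaryCubic, hz] at hH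
  refine Set.mem_biUnion (x := v 0) ?_ ⟨v 1, ?_, ?_⟩
  · have eight_ne_zero : (2 : k) ^ 3 ≠ 0 := pow_ne_zero _ two_ne_zero
    refine mul_left_cancel₀ eight_ne_zero ?_
    simp only [P, Polynomial.eval_add, Polynomial.eval_mul, Polynomial.eval_C, Polynomial.eval_pow,
      Polynomial.eval_X]
    linear_combination hH - 24 * v 0 * hW
  · change v 1 ^ 2 = _
    linear_combination hW
  · ext i
    fin_cases i <;> simp [hz]

theorem exists_smul_mem_weierstrassFlexes {a b : k} {v : Fin 3 → k} (hv : v ≠ 0)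
    (hW : eval v (weierstrass a b) = 0) (hH : eval v (hessian (weierstrass a b)) = 0) :
    ∃ r : kˣ, r • v ∈ weierstrassFlexes a b := by
  by_cases hz : v 2 = 0
  · have hx : v 0 = 0 := by
      simpa [weierstrass_eq_ternaryCubic, eval_ternaryCubic, hz] using hW
    have hy : v 1 ≠ 0 := fun hy => hv <| by
      ext i
      fin_cases i <;> assumption
    refine ⟨(Units.mk0 _ hy)⁻¹, Or.inl ?_⟩
    ext i
    fin_cases i <;> simp [Units.smul_def, hx, hy, hz]
  · have hhom := isHomogeneous_weierstrass a b
    refine ⟨(Units.mk0 _ hz)⁻¹, Or.inr ⟨?_, ?_, ?_⟩⟩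
    · simp [Units.smul_def, hz]
    · rw [Units.smul_def, eval_smul_of_isHomogeneous hhom, hW, mul_zero]
    · rw [Units.smul_def, eval_smul_of_isHomogeneous (isHomogeneous_hessian hhom), hH, mul_zero]

end Flexes

section FixedFlex

variable {a b c : k}

theorem exists_eq_diagonal_of_substMat_weierstrass [NeZero (2 : k)] [NeZero (3 : k)]
    {M : Matrix (Fin 3) (Fin 3) k} (hc : c ≠ 0)
    (h : substMat M (weierstrass a b) = c • weierstrass a b)
    (hM : M.mulVec (Pi.single 1 1) = Pi.single 1 1) :
    ∃ p : k, p ≠ 0 ∧ M = Matrix.diagonal ![p, 1, p ^ 3] := by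
  have hcol (i : Fin 3) : M i 1 = Pi.single (M := fun _ => k) 1 1 i := by
    simpa using congrFun hM i
  have h01 : M 0 1 = 0 := hcol 0
  have h11 : M 1 1 = 1 := hcol 1
  have h21 : M 2 1 = 0 := hcol 2
  have key (x y z : k) : (M 1 0 * x + y + M 1 2 * z) ^ 2 * (M 2 0 * x + M 2 2 * z)
      - (M 0 0 * x + M 0 2 * z) ^ 3 - a * ((M 0 0 * x + M 0 2 * z) * (M 2 0 * x + M 2 2 * z) ^ 2)
      - b * (M 2 0 * x + M 2 2 * z) ^ 3 =
        c * (y ^ 2 * z - x ^ 3 - a * (x * z ^ 2) - b * z ^ 3) := by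
    have heval := congrArg (eval ![x, y, z]) h
    rw [smul_eval, eval_substMat] at heval
    simpa [weierstrass, Matrix.mulVec, dotProduct, Fin.sum_univ_three, h01, h11, h21] using heval
  have two : (2 : k) ≠ 0 := two_ne_zero
  have four : (2 : k) ^ 2 ≠ 0 := pow_ne_zero _ two
  have six : (2 * 3 : k) ≠ 0 := mul_ne_zero two three_ne_zero
  have h20 : M 2 0 = 0 := mul_left_cancel₀ two <| by
    linear_combination key 1 1 0 + key 1 (-1) 0 - 2 * key 1 0 0
  have h22 : M 2 2 = c := mul_left_cancel₀ two <| by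
    linear_combination key 0 1 1 + key 0 (-1) 1 - 2 * key 0 0 1
  have h12 : M 1 2 = 0 := mul_left_cancel₀ (mul_ne_zero four hc) <| by
    linear_combination key 0 1 1 - key 0 (-1) 1 - 4 * M 1 2 * h22
  have h10 : M 1 0 = 0 := mul_left_cancel₀ (mul_ne_zero four hc) <| by
    linear_combination key 1 1 1 - key 1 (-1) 1 - 4 * (M 1 0 + M 1 2) * (h20 + h22) - 4 * c * h12
  have hpow : M 0 0 ^ 3 = c := by
    rw [h20, h10] at key
    linear_combination -key 1 0 0
  have h00 : M 0 0 ≠ 0 := fun h0 => hc (by rw [← hpow, h0, zero_pow three_ne_zero])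
  have h02 : M 0 2 = 0 := mul_left_cancel₀ (mul_ne_zero six (pow_ne_zero 2 h00)) <| by
    rw [h20, h10, h12, h22] at key
    linear_combination -(key 1 0 1 + key (-1) 0 1 - 2 * key 0 0 1)
  refine ⟨M 0 0, h00, ?_⟩
  rw [hpow]
  ext i j
  fin_cases i <;> fin_cases j <;> simp [h01, h11, h21, h20, h22, h12, h10, h02]

theorem pow_eq_one_of_smul_weierstrass_eq (hab : (a, b) ≠ (0, 0)) {p : kˣ}
    (h : (p : k) ^ 3 • weierstrass ((p : k) ^ 4 * a) ((p : k) ^ 6 * b) = c • weierstrass a b) :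
    p ^ 12 = 1 := by
  have heval (v : Fin 3 → k) := congrArg (eval v) h
  simp only [smul_eval, weierstrass_eq_ternaryCubic, eval_ternaryCubic] at heval
  have hc : c = (p : k) ^ 3 := by simpa using (heval ![1, 0, 0]).symm
  have hb : (p : k) ^ 6 * b = b := by
    simpa [hc] using heval ![0, 0, 1]
  have ha : (p : k) ^ 4 * a = a := by
    simpa [hc, hb] using heval ![1, 0, 1]
  ext
  push_cast
  by_cases ha0 : a = 0
  · have hb0 : b ≠ 0 := fun hb0 => hab (by rw [ha0, hb0])
    rw [pow_mul _ 6 2, mul_eq_right₀ hb0 |>.1 hb, one_pow]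
  · rw [pow_mul _ 4 3, mul_eq_right₀ ha0 |>.1 ha, one_pow]

variable [NeZero (2 : k)] [NeZero (3 : k)]

theorem finite_stabilizer_flex_infinity (hab : (a, b) ≠ (0, 0)) :
    (MulAction.stabilizer (linearStabilizer (weierstrass a b))
      (Pi.single 1 1 : Fin 3 → k) : Set (linearStabilizer (weierstrass a b))).Finite := by
  refine Set.Finite.of_finite_image (f := Subtype.val) ?_ Subtype.val_injective.injOn
  have finite_rootsOfUnity : (rootsOfUnity 12 k : Set kˣ).Finite :=
    Set.finite_coe_iff.1 (inferInstanceAs (Finite (rootsOfUnity 12 k)))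
  refine (finite_rootsOfUnity.image weierstrassTorus).subset ?_
  rintro _ ⟨⟨g, c, hc, h⟩, hfix, rfl⟩
  obtain ⟨p, hp, hg⟩ := exists_eq_diagonal_of_substMat_weierstrass hc h hfix
  have torus_eq : weierstrassTorus (Units.mk0 p hp) = g := Units.ext hg.symm
  refine ⟨Units.mk0 p hp, ?_, torus_eq⟩
  rw [← torus_eq, substMat_weierstrassTorus] at h
  exact pow_eq_one_of_smul_weierstrass_eq hab h

-- The stabilizer permutes the finitely many flexes, so it suffices that only finitely many of its
-- elements, up to scalars, fix the flex at infinity.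
theorem finite_projStabilizer_weierstrass [Infinite k] (hab : (a, b) ≠ (0, 0)) :
    (projStabilizer (weierstrass a b)).Finite := by
  have hfin := finite_setOf_smul_mem (finite_stabilizer_flex_infinity hab)
    (finite_weierstrassFlexes a b)
  refine ((hfin.image Subtype.val).image QuotientGroup.mk).subset ?_
  rintro _ ⟨g, hg : g ∈ linearStabilizer (weierstrass a b), rfl⟩
  have hne : g • (Pi.single 1 1 : Fin 3 → k) ≠ 0 := (smul_ne_zero_iff_ne g).2 (by simp)
  have hW : eval (g • Pi.single 1 1) (weierstrass a b) = 0 :=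
    eval_smul_eq_zero_of_mem_linearStabilizer hg (by simp [weierstrass])
  have hH : eval (g • Pi.single 1 1) (hessian (weierstrass a b)) = 0 :=
    eval_smul_eq_zero_of_mem_linearStabilizer (linearStabilizer_le_linearStabilizer_hessian _ hg)
      (by simp [hessian_weierstrass, eval_ternaryCubic])
  obtain ⟨r, hr⟩ := exists_smul_mem_weierstrassFlexes hne hW hH
  let s : GL (Fin 3) k := Matrix.GeneralLinearGroup.scalar (Fin 3) r
  have hs : s ∈ Subgroup.center (GL (Fin 3) k) := by
    rw [Matrix.GeneralLinearGroup.center_eq_range_scalar]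
    exact ⟨r, rfl⟩
  have smul_flex : (g * s) • (Pi.single 1 1 : Fin 3 → k) = r • g • Pi.single 1 1 := by
    rw [← Matrix.GeneralLinearGroup.scalar_commute, mul_smul, scalar_smul_eq]
  have hgs : g * s ∈ linearStabilizer (weierstrass a b) :=
    mul_mem hg (scalar_mem_linearStabilizer (isHomogeneous_weierstrass a b) r)
  refine ⟨g * s, ⟨⟨g * s, hgs⟩, ?_, rfl⟩, QuotientGroup.mk_mul_of_mem _ hs⟩
  rw [Set.mem_ofPred_eq, Subgroup.mk_smul, smul_flex]
  exact hr

end FixedFlex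

theorem finite_projStabilizer_weierstrass_iff [Infinite k] [NeZero (2 : k)] [NeZero (3 : k)]
    (a b : k) : (projStabilizer (weierstrass a b)).Finite ↔ (a, b) ≠ (0, 0) := by
  refine ⟨?_, finite_projStabilizer_weierstrass⟩
  rintro hfin ⟨rfl, rfl⟩
  exact infinite_projStabilizer_weierstrass_zero_zero hfin

end Stabilizer

theorem cubic_normal_form_general {k : Type*} [Field k] [Infinite k] [NeZero (2 : k)]
    [NeZero (3 : k)] (hk : PlaneCubicsMeet k) :
    (∀ Φ : MvPolynomial (Fin 3) k, Φ.IsHomogeneous 3 →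
      (Irreducible Φ ↔ ∃ (g : GL (Fin 3) k) (c a b : k), c ≠ 0 ∧
        substMat (↑g) Φ = c • weierstrass a b)) ∧
    (∀ (Φ : MvPolynomial (Fin 3) k) (g g' : GL (Fin 3) k) (c c' a b a' b' : k), c ≠ 0 → c' ≠ 0 →
        substMat (↑g) Φ = c • weierstrass a b →
        substMat (↑g') Φ = c' • weierstrass a' b' →
        ∃ t : k, t ≠ 0 ∧ a' = t ^ 4 * a ∧ b' = t ^ 6 * b) ∧
    (∀ a b : k, (projStabilizer (weierstrass a b)).Finite ↔ (a, b) ≠ (0, 0)) := by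
  refine ⟨fun Φ hΦ => ⟨fun hirr => ?_, ?_⟩, ?_, finite_projStabilizer_weierstrass_iff⟩
  · obtain ⟨a, b, g, c, hc, h⟩ := hasWeierstrassForm_of_irreducible hk hΦ hirr
    exact ⟨g, c, a, b, hc, h⟩
  · rintro ⟨g, c, a, b, hc, h⟩
    have hequiv : ProjEquiv Φ (weierstrass a b) := ⟨g, c, hc, h⟩
    exact hequiv.irreducible_iff.2 (irreducible_weierstrass a b)
  · intro Φ g g' c c' a b a' b' hc hc' h h'
    have hequiv : ProjEquiv Φ (weierstrass a b) := ⟨g, c, hc, h⟩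
    have hequiv' : ProjEquiv Φ (weierstrass a' b') := ⟨g', c', hc', h'⟩
    exact exists_eq_pow_mul_of_projEquiv_weierstrass (hequiv.symm.trans hequiv')

/-- **Statement 10.** Let `𝔽` be `ℝ` or `ℂ`.  A homogeneous cubic `Φ ∈ 𝔽[x,y,z]` is
irreducible iff it can be brought, by an `𝔽`-linear change of coordinates and a nonzero
scalar, to the normal form `y²z − x³ − a xz² − b z³`.  Moreover (a) the pair `(a, b)` is
unique up to `(a, b) ↦ (t⁴a, t⁶b)`, `t ≠ 0`; and (b) the curve `y²z = x³ + a xz² + b z³`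
has finite stabilizer in `PGL₃(𝔽)` iff `(a, b) ≠ (0, 0)`. -/
theorem cubic_normal_form {𝔽 : Type*} [RCLike 𝔽] :
    (∀ Φ : MvPolynomial (Fin 3) 𝔽, Φ.IsHomogeneous 3 →
      (Irreducible Φ ↔ ∃ (g : GL (Fin 3) 𝔽) (c a b : 𝔽), c ≠ 0 ∧
        substMat (↑g) Φ = c • weierstrass a b)) ∧
    (∀ Φ : MvPolynomial (Fin 3) 𝔽, Φ.IsHomogeneous 3 →
      ∀ (g g' : GL (Fin 3) 𝔽) (c c' a b a' b' : 𝔽), c ≠ 0 → c' ≠ 0 →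
        substMat (↑g) Φ = c • weierstrass a b →
        substMat (↑g') Φ = c' • weierstrass a' b' →
        ∃ t : 𝔽, t ≠ 0 ∧ a' = t ^ 4 * a ∧ b' = t ^ 6 * b) ∧
    (∀ a b : 𝔽, (projStabilizer (weierstrass a b)).Finite ↔ (a, b) ≠ (0, 0)) :=
  let ⟨irreducible_iff, unique, stabilizer⟩ :=
    cubic_normal_form_general (planeCubicsMeet_of_rclike 𝔽)
  ⟨irreducible_iff, fun Φ _ => unique Φ, stabilizer⟩
end
end

section
/- Every irreducible real cubic curve has a real flex point: if Φ ∈ ℝ[x,y,z] is an irreducible homogeneous polynomial of degree 3, then there exists p ∈ ℝ³ ∖ {0} with Φ(p) = 0, (∂Φ/∂x(p), ∂Φ/∂y(p), ∂Φ/∂z(p)) ≠ (0,0,0), and det H_Φ(p) = 0, where H_Φ is the 3×3 Hessian matrix of second partial derivatives of Φ. Likewise, every irreducible homogeneous cubic Φ ∈ ℂ[x,y,z] has a point p ∈ ℂ³ ∖ {0} with Φ(p) = 0, ∇Φ(p) ≠ 0, and det H_Φ(p) = 0. -/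
open MvPolynomial

/-!
Only one property of `ℝ` and `ℂ` matters: polynomials of odd degree have a root.

If the cubic has a singular point, move it to `(0 : 0 : 1)`, so that the cubic becomes
`z q(x, y) + c(x, y)`. On the curve the Hessian determinant is, up to a constant,
`disc(q) c - q ℓ` for a linear form `ℓ`. This binary cubic has a zero `(s : t)`, and `q(s, t) ≠ 0`
can be arranged because `q` and `c` have no common zero; then `(s, t, -c / q)` is a flex.

If the cubic is smooth, take a point `P` on it and the point `Q` where the tangent at `P` meets the
curve again. Unless `P` or `Q` is a flex, coordinates adapted to both tangents bring the cubic into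
Nagell's form `x z² + (a y² + g x²) z + x² (d y + e x)`, where `a, d ≠ 0`. On the chart `x = 1` it
is the double cover `w² = D(y)` with `w = 2z + a y² + g` and `D` a quartic, and `z` has second
derivative zero with respect to `y` where `T(y) = a w³`, for a certain polynomial `T`. Eliminating
`w` leaves `T² = a² D³`, of degree exactly `9` because the terms of higher degree cancel. A root `y`
has a matching `w`, since `(T / a)² = D³` makes `T / a` the cube and `D` the square of a common `w`.
-/

open scoped Matrix

section LinearSubstitution

variable {R σ τ : Type*} [CommRing R] [Fintype τ]

/-- The pullback of a polynomial along the linear map with matrix `M`, i.e. `Φ ↦ Φ ∘ M`. -/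
noncomputable def linSubst (M : Matrix σ τ R) : MvPolynomial σ R →ₐ[R] MvPolynomial τ R :=
  bind₁ M.toMvPolynomial

/-- The gradient `∇Φ(p)`. -/
noncomputable def gradientAt (Φ : MvPolynomial σ R) (p : σ → R) : σ → R :=
  fun i => eval p (pderiv i Φ)

/-- The Hessian matrix `H_Φ(p)`. -/
noncomputable def hessianAt (Φ : MvPolynomial σ R) (p : σ → R) : Matrix σ σ R :=
  Matrix.of fun i j => eval p (pderiv i (pderiv j Φ))

theorem eval_linSubst (M : Matrix σ τ R) (p : τ → R) (Φ : MvPolynomial σ R) :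
    eval p (linSubst M Φ) = eval (M *ᵥ p) Φ := by
  simp only [linSubst, eval, eval₂Hom_bind₁]
  congr 2
  exact funext fun i => M.toMvPolynomial_eval_eq_apply i p

theorem isHomogeneous_linSubst (M : Matrix σ τ R) {Φ : MvPolynomial σ R} {n : ℕ}
    (hΦ : Φ.IsHomogeneous n) : (linSubst M Φ).IsHomogeneous n := by
  simpa [linSubst] using hΦ.aeval _ M.toMvPolynomial_isHomogeneous

theorem linSubst_comp_linSubst_of_mul_eq_one [DecidableEq τ] {M N : Matrix τ τ R}
    (h : N * M = 1) : (linSubst M).comp (linSubst N) = AlgHom.id R (MvPolynomial τ R) := by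
  ext1 i
  simp [linSubst, ← Matrix.toMvPolynomial_mul, h, Matrix.toMvPolynomial_one]

theorem irreducible_linSubst [DecidableEq τ] {M : Matrix τ τ R} (hM : IsUnit M)
    {Φ : MvPolynomial τ R} (hΦ : Irreducible Φ) : Irreducible (linSubst M Φ) := by
  obtain ⟨N, hMN, hNM⟩ := isUnit_iff_exists.mp hM
  let e : MvPolynomial τ R ≃ₐ[R] MvPolynomial τ R :=
    .ofAlgHom (linSubst M) (linSubst N) (linSubst_comp_linSubst_of_mul_eq_one hNM)
      (linSubst_comp_linSubst_of_mul_eq_one hMN)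
  exact (MulEquiv.irreducible_iff e).mpr hΦ

variable [Fintype σ]

theorem pderiv_linSubst (M : Matrix σ τ R) (j : τ) (Φ : MvPolynomial σ R) :
    pderiv j (linSubst M Φ) = ∑ i, C (M i j) * linSubst M (pderiv i Φ) := by
  classical
  induction Φ using MvPolynomial.induction_on with
  | C a => simp [linSubst]
  | add Φ Ψ hΦ hΨ => simp [hΦ, hΨ, mul_add, Finset.sum_add_distrib]
  | mul_X Φ i hΦ =>
    have hX : pderiv j (linSubst M (X i)) = C (M i j) := by
      simp [linSubst, Matrix.toMvPolynomial, ← C_mul_X_eq_monomial, pderiv_X, Pi.single_apply]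
    simp only [map_mul, pderiv_mul, hΦ, hX, map_add, mul_add, Finset.sum_add_distrib,
      Finset.sum_mul, mul_assoc]
    simp [pderiv_X, Pi.single_apply, mul_comm]

theorem gradientAt_linSubst (M : Matrix σ τ R) (Φ : MvPolynomial σ R) (p : τ → R) :
    gradientAt (linSubst M Φ) p = gradientAt Φ (M *ᵥ p) ᵥ* M := by
  ext j
  simp [gradientAt, pderiv_linSubst, eval_linSubst, Matrix.vecMul, dotProduct, mul_comm]

theorem hessianAt_linSubst (M : Matrix σ τ R) (Φ : MvPolynomial σ R) (p : τ → R) :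
    hessianAt (linSubst M Φ) p = Mᵀ * hessianAt Φ (M *ᵥ p) * M := by
  ext i j
  simp [hessianAt, pderiv_linSubst, eval_linSubst, Matrix.mul_apply, Finset.mul_sum,
    mul_comm]

theorem gradientAt_dotProduct_self {Φ : MvPolynomial σ R} {n : ℕ} (hΦ : Φ.IsHomogeneous n)
    (p : σ → R) : gradientAt Φ p ⬝ᵥ p = n * eval p Φ := by
  simpa [gradientAt, dotProduct, mul_comm] using congrArg (eval p) hΦ.sum_X_mul_pderiv

end LinearSubstitution

section Flex

variable {K σ : Type*} [Field K] [Fintype σ] [DecidableEq σ]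

/-- A common zero, other than the origin, of `Φ` and of its Hessian determinant, i.e. a point where
the projective curve `Φ = 0` meets its Hessian curve. -/
def IsHessianPoint (Φ : MvPolynomial σ K) (p : σ → K) : Prop :=
  p ≠ 0 ∧ eval p Φ = 0 ∧ (hessianAt Φ p).det = 0

/-- A flex point of the curve `Φ = 0`: a nonsingular point on its Hessian curve. -/
def IsFlex (Φ : MvPolynomial σ K) (p : σ → K) : Prop :=
  IsHessianPoint Φ p ∧ gradientAt Φ p ≠ 0

variable {M : Matrix σ σ K} {Φ : MvPolynomial σ K} {p : σ → K}

theorem IsHessianPoint.of_linSubst (hM : IsUnit M) (h : IsHessianPoint (linSubst M Φ) p) :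
    IsHessianPoint Φ (M *ᵥ p) := by
  obtain ⟨hp, hΦ, hdet⟩ := h
  have hMdet : M.det ≠ 0 := (M.isUnit_iff_isUnit_det.mp hM).ne_zero
  refine ⟨fun h => hp (Matrix.eq_zero_of_mulVec_eq_zero hMdet h), by rwa [← eval_linSubst], ?_⟩
  simpa [hessianAt_linSubst, hMdet] using hdet

theorem IsFlex.of_linSubst (hM : IsUnit M) (h : IsFlex (linSubst M Φ) p) : IsFlex Φ (M *ᵥ p) := by
  refine ⟨h.1.of_linSubst hM, fun hΦ => h.2 ?_⟩
  rw [gradientAt_linSubst, hΦ, Matrix.zero_vecMul]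

end Flex

section Frames

variable {K : Type*} [Field K]

theorem isUnit_transpose_of_linearIndependent {b : Fin 3 → Fin 3 → K}
    (hb : LinearIndependent K b) : IsUnit (Matrix.of b)ᵀ :=
  Matrix.linearIndependent_cols_iff_isUnit.mp hb

theorem transpose_of_mulVec (u v w : Fin 3 → K) (x y z : K) :
    (Matrix.of ![u, v, w])ᵀ *ᵥ ![x, y, z] = x • u + y • v + z • w := by
  ext i
  simp [Matrix.mulVec, dotProduct, Fin.sum_univ_three, mul_comm]

theorem exists_linearIndependent_triple {v w : Fin 3 → K} (h : LinearIndependent K ![v, w]) :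
    ∃ u, LinearIndependent K ![u, v, w] :=
  exists_linearIndependent_cons_of_lt_finrank h (by simp)

theorem exists_linearIndependent_pair {V : Type*} [AddCommGroup V] [Module K V]
    (hV : 1 < Module.finrank K V) {w : V} (hw : w ≠ 0) : ∃ v, LinearIndependent K ![v, w] :=
  exists_linearIndependent_cons_of_lt_finrank (v := ![w]) (.of_subsingleton 0 hw) hV

theorem exists_isUnit_mulVec_eq {p : Fin 3 → K} (hp : p ≠ 0) :
    ∃ M : Matrix (Fin 3) (Fin 3) K, IsUnit M ∧ M *ᵥ ![0, 0, 1] = p := by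
  obtain ⟨v, hv⟩ := exists_linearIndependent_pair (K := K) (by simp) hp
  obtain ⟨u, hu⟩ := exists_linearIndependent_triple hv
  refine ⟨(Matrix.of ![u, v, p])ᵀ, isUnit_transpose_of_linearIndependent hu, ?_⟩
  simp [transpose_of_mulVec]

theorem exists_linearIndependent_pair_of_dotProduct_eq_zero {φ p : Fin 3 → K} (hφ : φ ≠ 0)
    (hp : p ≠ 0) (hφp : φ ⬝ᵥ p = 0) : ∃ v, φ ⬝ᵥ v = 0 ∧ LinearIndependent K ![v, p] := by
  set f : Module.Dual K (Fin 3 → K) := dotProductEquiv K (Fin 3) φ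
  have hf : f ≠ 0 := (dotProductEquiv K (Fin 3)).map_ne_zero_iff.mpr hφ
  have hker : 1 < Module.finrank K f.ker := by
    have := Module.Dual.finrank_ker_add_one_of_ne_zero hf
    rw [Module.finrank_fin_fun] at this
    omega
  have hp' : (⟨p, hφp⟩ : f.ker) ≠ 0 := fun h => hp (congrArg Subtype.val h)
  obtain ⟨v, hv⟩ := exists_linearIndependent_pair hker hp'
  have hv' : LinearIndependent K ![(v : Fin 3 → K), p] := by
    have := hv.map' f.ker.subtype (Submodule.ker_subtype _)
    rwa [← FinVec.map_eq] at this
  exact ⟨v, v.2, hv'⟩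

theorem exists_dotProduct_eq_one {φ : Fin 3 → K} (hφ : φ ≠ 0) : ∃ u, φ ⬝ᵥ u = 1 :=
  LinearMap.surjective ((dotProductEquiv K (Fin 3)).map_ne_zero_iff.mpr hφ) 1

theorem exists_isUnit_mulVec_eq_vecMul_eq {φ p : Fin 3 → K} (hφ : φ ≠ 0) (hp : p ≠ 0)
    (hφp : φ ⬝ᵥ p = 0) :
    ∃ M : Matrix (Fin 3) (Fin 3) K, IsUnit M ∧ M *ᵥ ![0, 0, 1] = p ∧ φ ᵥ* M = ![1, 0, 0] := by
  obtain ⟨v, hφv, hv⟩ := exists_linearIndependent_pair_of_dotProduct_eq_zero hφ hp hφp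
  obtain ⟨u, hφu⟩ := exists_dotProduct_eq_one hφ
  have hspan : u ∉ Submodule.span K (Set.range ![v, p]) := by
    intro hu
    have hle : Submodule.span K (Set.range ![v, p]) ≤ (dotProductEquiv K (Fin 3) φ).ker := by
      rw [Submodule.span_le, Set.range_subset_iff, Fin.forall_fin_two]
      exact ⟨hφv, hφp⟩
    exact one_ne_zero (hφu.symm.trans (hle hu))
  have hM := isUnit_transpose_of_linearIndependent (linearIndependent_finCons.mpr ⟨hv, hspan⟩)
  refine ⟨(Matrix.of ![u, v, p])ᵀ, hM, by simp [transpose_of_mulVec], ?_⟩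
  rw [Matrix.vecMul_transpose]
  ext i
  fin_cases i <;> simp [Matrix.mulVec, dotProduct_comm, *]

end Frames

section CubicForm

variable {R : Type*} [CommRing R]

/-- The ternary cubic `c(x, y) + q(x, y) z + l(x, y) z² + m z³`, where `c`, `q`, `l` are the binary
forms of degrees `3`, `2`, `1` with the given coefficients, listed by decreasing powers of `x`. -/
noncomputable def cubicForm (c₀ c₁ c₂ c₃ q₀ q₁ q₂ l₀ l₁ m : R) : MvPolynomial (Fin 3) R :=
  C c₀ * X 0 ^ 3 + C c₁ * X 0 ^ 2 * X 1 + C c₂ * X 0 * X 1 ^ 2 + C c₃ * X 1 ^ 3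
    + (C q₀ * X 0 ^ 2 + C q₁ * X 0 * X 1 + C q₂ * X 1 ^ 2) * X 2
    + (C l₀ * X 0 + C l₁ * X 1) * X 2 ^ 2 + C m * X 2 ^ 3

theorem eval_cubicForm (c₀ c₁ c₂ c₃ q₀ q₁ q₂ l₀ l₁ m x y z : R) :
    eval ![x, y, z] (cubicForm c₀ c₁ c₂ c₃ q₀ q₁ q₂ l₀ l₁ m) =
      c₀ * x ^ 3 + c₁ * x ^ 2 * y + c₂ * x * y ^ 2 + c₃ * y ^ 3
        + (q₀ * x ^ 2 + q₁ * x * y + q₂ * y ^ 2) * z + (l₀ * x + l₁ * y) * z ^ 2 + m * z ^ 3 := by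
  simp [cubicForm]

theorem pderiv_zero_cubicForm (c₀ c₁ c₂ c₃ q₀ q₁ q₂ l₀ l₁ m : R) :
    pderiv 0 (cubicForm c₀ c₁ c₂ c₃ q₀ q₁ q₂ l₀ l₁ m) =
      C (3 * c₀) * X 0 ^ 2 + C (2 * c₁) * X 0 * X 1 + C c₂ * X 1 ^ 2
        + (C (2 * q₀) * X 0 + C q₁ * X 1) * X 2 + C l₀ * X 2 ^ 2 := by
  simp only [cubicForm, map_add, pderiv_mul, pderiv_pow, pderiv_C, pderiv_X, Pi.single_apply,
    Fin.reduceEq, reduceIte, C_mul, map_ofNat C]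
  ring

theorem pderiv_one_cubicForm (c₀ c₁ c₂ c₃ q₀ q₁ q₂ l₀ l₁ m : R) :
    pderiv 1 (cubicForm c₀ c₁ c₂ c₃ q₀ q₁ q₂ l₀ l₁ m) =
      C c₁ * X 0 ^ 2 + C (2 * c₂) * X 0 * X 1 + C (3 * c₃) * X 1 ^ 2
        + (C q₁ * X 0 + C (2 * q₂) * X 1) * X 2 + C l₁ * X 2 ^ 2 := by
  simp only [cubicForm, map_add, pderiv_mul, pderiv_pow, pderiv_C, pderiv_X, Pi.single_apply,
    Fin.reduceEq, reduceIte, C_mul, map_ofNat C]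
  ring

theorem pderiv_two_cubicForm (c₀ c₁ c₂ c₃ q₀ q₁ q₂ l₀ l₁ m : R) :
    pderiv 2 (cubicForm c₀ c₁ c₂ c₃ q₀ q₁ q₂ l₀ l₁ m) =
      C q₀ * X 0 ^ 2 + C q₁ * X 0 * X 1 + C q₂ * X 1 ^ 2
        + (C (2 * l₀) * X 0 + C (2 * l₁) * X 1) * X 2 + C (3 * m) * X 2 ^ 2 := by
  simp only [cubicForm, map_add, pderiv_mul, pderiv_pow, pderiv_C, pderiv_X, Pi.single_apply,
    Fin.reduceEq, reduceIte, C_mul, map_ofNat C]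
  ring

theorem gradientAt_cubicForm (c₀ c₁ c₂ c₃ q₀ q₁ q₂ l₀ l₁ m x y z : R) :
    gradientAt (cubicForm c₀ c₁ c₂ c₃ q₀ q₁ q₂ l₀ l₁ m) ![x, y, z] =
      ![3 * c₀ * x ^ 2 + 2 * c₁ * x * y + c₂ * y ^ 2 + (2 * q₀ * x + q₁ * y) * z + l₀ * z ^ 2,
        c₁ * x ^ 2 + 2 * c₂ * x * y + 3 * c₃ * y ^ 2 + (q₁ * x + 2 * q₂ * y) * z + l₁ * z ^ 2,
        q₀ * x ^ 2 + q₁ * x * y + q₂ * y ^ 2 + (2 * l₀ * x + 2 * l₁ * y) * z + 3 * m * z ^ 2] := by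
  ext i
  fin_cases i <;>
    simp [gradientAt, pderiv_zero_cubicForm, pderiv_one_cubicForm, pderiv_two_cubicForm]

theorem hessianAt_cubicForm (c₀ c₁ c₂ c₃ q₀ q₁ q₂ l₀ l₁ m x y z : R) :
    hessianAt (cubicForm c₀ c₁ c₂ c₃ q₀ q₁ q₂ l₀ l₁ m) ![x, y, z] =
      !![6 * c₀ * x + 2 * c₁ * y + 2 * q₀ * z, 2 * c₁ * x + 2 * c₂ * y + q₁ * z,
          2 * q₀ * x + q₁ * y + 2 * l₀ * z;
        2 * c₁ * x + 2 * c₂ * y + q₁ * z, 2 * c₂ * x + 6 * c₃ * y + 2 * q₂ * z,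
          q₁ * x + 2 * q₂ * y + 2 * l₁ * z;
        2 * q₀ * x + q₁ * y + 2 * l₀ * z, q₁ * x + 2 * q₂ * y + 2 * l₁ * z,
          2 * l₀ * x + 2 * l₁ * y + 6 * m * z] := by
  ext i j
  fin_cases i <;> fin_cases j <;>
    simp only [hessianAt, Matrix.of_apply, Matrix.cons_val, pderiv_zero_cubicForm,
      pderiv_one_cubicForm, pderiv_two_cubicForm, map_add, pderiv_mul, pderiv_pow, pderiv_C,
      pderiv_X, Pi.single_apply, Fin.reduceFinMk, Fin.reduceEq, reduceIte, map_mul, map_pow,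
      map_zero, map_one, map_natCast, eval_C, eval_X] <;>
    ring

theorem det_hessianAt_cubicForm_of_singular (c₀ c₁ c₂ c₃ q₀ q₁ q₂ x y z : R) :
    (hessianAt (cubicForm c₀ c₁ c₂ c₃ q₀ q₁ q₂ 0 0 0) ![x, y, z]).det =
      (4 * q₀ * q₂ - q₁ ^ 2) *
          (6 * (c₀ * x ^ 3 + c₁ * x ^ 2 * y + c₂ * x * y ^ 2 + c₃ * y ^ 3)
            - 2 * (q₀ * x ^ 2 + q₁ * x * y + q₂ * y ^ 2) * z)
        - 8 * (q₀ * x ^ 2 + q₁ * x * y + q₂ * y ^ 2) *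
          ((3 * q₂ * c₀ - q₁ * c₁ + q₀ * c₂) * x + (q₂ * c₁ - q₁ * c₂ + 3 * q₀ * c₃) * y) := by
  rw [hessianAt_cubicForm, Matrix.det_fin_three]
  simp only [Matrix.of_apply, Matrix.cons_val]
  ring

/-- The exponent of the monomial `x ^ i * y ^ j * z ^ k`. -/
noncomputable def ternaryExponent (i j k : ℕ) : Fin 3 →₀ ℕ :=
  Finsupp.equivFunOnFinite.symm ![i, j, k]

theorem ternaryExponent_inj {i j k i' j' k' : ℕ} :
    ternaryExponent i j k = ternaryExponent i' j' k' ↔ i = i' ∧ j = j' ∧ k = k' := by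
  simp [ternaryExponent]

theorem monomial_ternaryExponent (i j k : ℕ) (r : R) :
    monomial (ternaryExponent i j k) r = C r * X 0 ^ i * X 1 ^ j * X 2 ^ k := by
  rw [monomial_eq, Finsupp.prod_fintype _ _ (by simp)]
  simp [Fin.prod_univ_three, ternaryExponent, mul_assoc]

theorem cubicForm_eq_sum_monomial (c₀ c₁ c₂ c₃ q₀ q₁ q₂ l₀ l₁ m : R) :
    cubicForm c₀ c₁ c₂ c₃ q₀ q₁ q₂ l₀ l₁ m =
      monomial (ternaryExponent 3 0 0) c₀ + monomial (ternaryExponent 2 1 0) c₁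
        + monomial (ternaryExponent 1 2 0) c₂ + monomial (ternaryExponent 0 3 0) c₃
        + monomial (ternaryExponent 2 0 1) q₀ + monomial (ternaryExponent 1 1 1) q₁
        + monomial (ternaryExponent 0 2 1) q₂ + monomial (ternaryExponent 1 0 2) l₀
        + monomial (ternaryExponent 0 1 2) l₁ + monomial (ternaryExponent 0 0 3) m := by
  simp only [monomial_ternaryExponent, cubicForm]
  ring

theorem exists_eq_cubicForm {Φ : MvPolynomial (Fin 3) R} (hΦ : Φ.IsHomogeneous 3) :
    ∃ c₀ c₁ c₂ c₃ q₀ q₁ q₂ l₀ l₁ m, Φ = cubicForm c₀ c₁ c₂ c₃ q₀ q₁ q₂ l₀ l₁ m := by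
  let a (i j k : ℕ) : R := coeff (ternaryExponent i j k) Φ
  refine ⟨a 3 0 0, a 2 1 0, a 1 2 0, a 0 3 0, a 2 0 1, a 1 1 1, a 0 2 1, a 1 0 2, a 0 1 2,
    a 0 0 3, ?_⟩
  rw [cubicForm_eq_sum_monomial]
  ext d
  obtain ⟨i, j, k, rfl⟩ : ∃ i j k, d = ternaryExponent i j k :=
    ⟨d 0, d 1, d 2, by ext i; fin_cases i <;> rfl⟩
  simp only [coeff_add, coeff_monomial, ternaryExponent_inj]
  by_cases hd : i + j + k = 3
  · have hi : i ≤ 3 := by omega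
    have hj : j ≤ 3 := by omega
    obtain rfl : k = 3 - i - j := by omega
    interval_cases i <;> interval_cases j <;> first | omega | simp [a]
  · have hne (i' j' k' : ℕ) (h : i' + j' + k' = 3) : ¬ (i' = i ∧ j' = j ∧ k' = k) := by omega
    rw [hΦ.coeff_eq_zero]
    · simp [hne]
    · simpa [Finsupp.degree_eq_sum, Fin.sum_univ_three, ternaryExponent] using hd

theorem linSubst_shear_cubicForm (c₀ c₁ c₂ c₃ q₀ q₁ q₂ r s t : R) :
    linSubst !![1, 0, 0; r, 1, 0; s, t, 1] (cubicForm c₀ c₁ c₂ c₃ q₀ q₁ q₂ 1 0 0) =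
      cubicForm
        (c₀ + c₁ * r + c₂ * r ^ 2 + c₃ * r ^ 3 + q₀ * s + q₁ * r * s + q₂ * r ^ 2 * s + s ^ 2)
        (c₁ + 2 * c₂ * r + 3 * c₃ * r ^ 2 + q₀ * t + q₁ * (r * t + s)
          + q₂ * (r ^ 2 * t + 2 * r * s) + 2 * s * t)
        (c₂ + 3 * c₃ * r + q₁ * t + q₂ * (2 * r * t + s) + t ^ 2) (c₃ + q₂ * t)
        (q₀ + q₁ * r + q₂ * r ^ 2 + 2 * s) (q₁ + 2 * q₂ * r + 2 * t) q₂ 1 0 0 := by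
  simp only [linSubst, cubicForm, Matrix.toMvPolynomial, ← C_mul_X_eq_monomial, Fin.sum_univ_three,
    Matrix.of_apply, Matrix.cons_val, bind₁_C_right, bind₁_X_right, map_add, map_mul, map_pow,
    map_ofNat C, map_zero, map_one]
  ring

end CubicForm

section OddDegreeRoots

/-- Every polynomial of odd degree over `K` has a root in `K`. -/
def HasOddDegreeRoots (K : Type*) [Field K] : Prop :=
  ∀ f : Polynomial K, Odd f.natDegree → ∃ x, f.IsRoot x

theorem hasOddDegreeRoots_of_isAlgClosed (K : Type*) [Field K] [IsAlgClosed K] :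
    HasOddDegreeRoots K :=
  fun f hf => IsAlgClosed.exists_root f
    (Polynomial.natDegree_pos_iff_degree_pos.mp hf.pos).ne'

theorem hasOddDegreeRoots_real : HasOddDegreeRoots ℝ := by
  intro f hf
  have hlead : (f * f.comp (-Polynomial.X)).leadingCoeff ≤ 0 := by
    rw [Polynomial.leadingCoeff_mul, Polynomial.leadingCoeff_comp (by simp)]
    simp [hf.neg_one_pow, mul_self_nonneg]
  have hdeg : 0 < (f * f.comp (-Polynomial.X)).degree := by
    have hpos : 0 < (f.comp (-Polynomial.X)).natDegree := by
      simpa [Polynomial.natDegree_comp] using hf.pos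
    rw [Polynomial.degree_mul]
    exact add_pos_of_pos_of_nonneg (Polynomial.natDegree_pos_iff_degree_pos.mp hf.pos)
      (Polynomial.natDegree_pos_iff_degree_pos.mp hpos).le
  obtain ⟨x, hx⟩ := ((Polynomial.tendsto_atBot_of_leadingCoeff_nonpos _ hdeg hlead).eventually
    (Filter.eventually_le_atBot 0)).exists
  have hx' : f.eval x * f.eval (-x) ≤ 0 := by simpa using hx
  rcases mul_nonpos_iff.mp hx' with ⟨hpos, hneg⟩ | ⟨hneg, hpos⟩ <;>
    exact mem_range_of_exists_le_of_exists_ge f.continuous ⟨_, hneg⟩ ⟨_, hpos⟩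

theorem HasOddDegreeRoots.exists_binaryCubic_eq_zero {K : Type*} [Field K]
    (hK : HasOddDegreeRoots K) (a b c d : K) :
    ∃ s t, (s ≠ 0 ∨ t ≠ 0) ∧ a * s ^ 3 + b * s ^ 2 * t + c * s * t ^ 2 + d * t ^ 3 = 0 := by
  by_cases hd : d = 0
  · exact ⟨0, 1, by simp [hd]⟩
  have hdeg : (.C d * .X ^ 3 + .C c * .X ^ 2 + .C b * .X + .C a : Polynomial K).natDegree = 3 := by
    compute_degree!
  obtain ⟨t, ht⟩ := hK _ (by rw [hdeg]; decide)
  refine ⟨1, t, by simp, ?_⟩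
  simp only [Polynomial.IsRoot.def, Polynomial.eval_add, Polynomial.eval_mul, Polynomial.eval_C,
    Polynomial.eval_pow, Polynomial.eval_X] at ht
  linear_combination ht

end OddDegreeRoots

section SingularCubic

variable {K : Type*} [Field K] [NeZero (2 : K)]

theorem not_irreducible_of_eval_eq_zero_on_line {Φ : MvPolynomial (Fin 3) K}
    (hΦ : Φ.IsHomogeneous 3) {v w : Fin 3 → K} (hvw : LinearIndependent K ![v, w])
    (hline : ∀ y z : K, eval (y • v + z • w) Φ = 0) : ¬ Irreducible Φ := by
  intro hirr
  obtain ⟨u, hu⟩ := exists_linearIndependent_triple hvw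
  set M := (Matrix.of ![u, v, w])ᵀ
  have hM : IsUnit M := isUnit_transpose_of_linearIndependent hu
  have hirr' := irreducible_linSubst hM hirr
  have hzero (y z : K) : eval ![0, y, z] (linSubst M Φ) = 0 := by
    rw [eval_linSubst, transpose_of_mulVec, zero_smul, zero_add, hline]
  obtain ⟨c₀, c₁, c₂, c₃, q₀, q₁, q₂, l₀, l₁, m, hcubic⟩ :=
    exists_eq_cubicForm (isHomogeneous_linSubst M hΦ)
  simp only [hcubic, eval_cubicForm] at hzero hirr'
  obtain rfl : c₃ = 0 := by simpa using hzero 1 0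
  obtain rfl : m = 0 := by simpa using hzero 0 1
  have hadd := hzero 1 1
  have hsub := hzero 1 (-1)
  obtain rfl : l₁ = 0 := by
    refine (mul_eq_zero.mp ?_).resolve_left (two_ne_zero' K)
    linear_combination hadd + hsub
  obtain rfl : q₂ = 0 := by linear_combination hadd
  have hfactor : cubicForm c₀ c₁ c₂ 0 q₀ q₁ 0 l₀ 0 0 =
      X 0 * (C c₀ * X 0 ^ 2 + C c₁ * X 0 * X 1 + C c₂ * X 1 ^ 2
        + (C q₀ * X 0 + C q₁ * X 1) * X 2 + C l₀ * X 2 ^ 2) := by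
    simp only [cubicForm, map_zero]
    ring
  rcases hirr'.isUnit_or_isUnit hfactor with h | h <;>
    simpa using h.map (eval (0 : Fin 3 → K))

theorem exists_eq_mul_sq_of_disc_eq_zero {q₀ q₁ q₂ : K} (h : 4 * q₀ * q₂ - q₁ ^ 2 = 0) :
    ∃ k a b : K, (a ≠ 0 ∨ b ≠ 0) ∧ q₀ = k * a ^ 2 ∧ q₁ = 2 * k * a * b ∧ q₂ = k * b ^ 2 := by
  by_cases h0 : q₀ = 0
  · subst h0
    obtain rfl : q₁ = 0 := by simpa using h
    exact ⟨q₂, 0, 1, by simp⟩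
  · have h2 : (2 : K) ≠ 0 := two_ne_zero
    refine ⟨q₀, 1, q₁ / (2 * q₀), by simp, by ring, by field_simp, ?_⟩
    field_simp
    linear_combination h

theorem cubic_ne_zero_of_quadratic_eq_zero {c₀ c₁ c₂ c₃ q₀ q₁ q₂ : K}
    (hhom : (cubicForm c₀ c₁ c₂ c₃ q₀ q₁ q₂ 0 0 0).IsHomogeneous 3)
    (hirr : Irreducible (cubicForm c₀ c₁ c₂ c₃ q₀ q₁ q₂ 0 0 0)) {s t : K} (hst : s ≠ 0 ∨ t ≠ 0)
    (hq : q₀ * s ^ 2 + q₁ * s * t + q₂ * t ^ 2 = 0) :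
    c₀ * s ^ 3 + c₁ * s ^ 2 * t + c₂ * s * t ^ 2 + c₃ * t ^ 3 ≠ 0 := by
  intro hc
  have hvw : LinearIndependent K ![![s, t, 0], ![0, 0, 1]] := by
    refine LinearIndependent.pair_iff.mpr fun y z h => ?_
    have hys : y * s = 0 := by simpa using congrFun h 0
    have hyt : y * t = 0 := by simpa using congrFun h 1
    have hz : z = 0 := by simpa using congrFun h 2
    grind
  refine not_irreducible_of_eval_eq_zero_on_line hhom hvw (fun y z => ?_) hirr
  have hpoint : y • ![s, t, 0] + z • ![0, 0, 1] = ![y * s, y * t, z] := by simp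
  rw [hpoint, eval_cubicForm]
  linear_combination y ^ 3 * hc + y ^ 2 * z * hq

variable [NeZero (3 : K)]

theorem exists_disc_mul_cubic_eq_quadratic_mul_linear (hK : HasOddDegreeRoots K)
    {c₀ c₁ c₂ c₃ q₀ q₁ q₂ : K}
    (hcq : ∀ s t, (s ≠ 0 ∨ t ≠ 0) → q₀ * s ^ 2 + q₁ * s * t + q₂ * t ^ 2 = 0 →
      c₀ * s ^ 3 + c₁ * s ^ 2 * t + c₂ * s * t ^ 2 + c₃ * t ^ 3 ≠ 0) :
    ∃ s t, q₀ * s ^ 2 + q₁ * s * t + q₂ * t ^ 2 ≠ 0 ∧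
      (4 * q₀ * q₂ - q₁ ^ 2) * (c₀ * s ^ 3 + c₁ * s ^ 2 * t + c₂ * s * t ^ 2 + c₃ * t ^ 3) =
        (q₀ * s ^ 2 + q₁ * s * t + q₂ * t ^ 2) *
          ((3 * q₂ * c₀ - q₁ * c₁ + q₀ * c₂) * s + (q₂ * c₁ - q₁ * c₂ + 3 * q₀ * c₃) * t) := by
  set Δ := 4 * q₀ * q₂ - q₁ ^ 2
  set e₁ := 3 * q₂ * c₀ - q₁ * c₁ + q₀ * c₂ with he₁
  set e₂ := q₂ * c₁ - q₁ * c₂ + 3 * q₀ * c₃ with he₂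
  by_cases hΔ : Δ = 0
  · obtain ⟨k, a, b, hab, rfl, rfl, rfl⟩ := exists_eq_mul_sq_of_disc_eq_zero hΔ
    have hk : k ≠ 0 := by
      rintro rfl
      obtain ⟨s, t, hst, hc⟩ := hK.exists_binaryCubic_eq_zero c₀ c₁ c₂ c₃
      exact hcq s t hst (by ring) hc
    have hc := hcq b (-a) (by simpa using hab.symm) (by ring)
    refine ⟨e₂, -e₁, ?_, by rw [hΔ]; ring⟩
    convert mul_ne_zero (pow_ne_zero 3 hk) (pow_ne_zero 2 (mul_ne_zero (three_ne_zero' K) hc))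
      using 1
    rw [he₁, he₂]
    ring
  · obtain ⟨s, t, hst, h⟩ := hK.exists_binaryCubic_eq_zero (Δ * c₀ - q₀ * e₁)
      (Δ * c₁ - q₀ * e₂ - q₁ * e₁) (Δ * c₂ - q₁ * e₂ - q₂ * e₁) (Δ * c₃ - q₂ * e₂)
    refine ⟨s, t, fun hq => hcq s t hst hq ?_, by linear_combination h⟩
    refine (mul_eq_zero.mp ?_).resolve_left hΔ
    linear_combination h + (e₁ * s + e₂ * t) * hq

theorem exists_isFlex_cubicForm_of_singular (hK : HasOddDegreeRoots K)
    {c₀ c₁ c₂ c₃ q₀ q₁ q₂ : K} (hhom : (cubicForm c₀ c₁ c₂ c₃ q₀ q₁ q₂ 0 0 0).IsHomogeneous 3)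
    (hirr : Irreducible (cubicForm c₀ c₁ c₂ c₃ q₀ q₁ q₂ 0 0 0)) :
    ∃ p, IsFlex (cubicForm c₀ c₁ c₂ c₃ q₀ q₁ q₂ 0 0 0) p := by
  obtain ⟨s, t, hq, hdet⟩ := exists_disc_mul_cubic_eq_quadratic_mul_linear hK
    fun _ _ => cubic_ne_zero_of_quadratic_eq_zero hhom hirr
  set c := c₀ * s ^ 3 + c₁ * s ^ 2 * t + c₂ * s * t ^ 2 + c₃ * t ^ 3 with hc
  set q := q₀ * s ^ 2 + q₁ * s * t + q₂ * t ^ 2 with hq_def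
  have hz : q * (-c / q) = -c := mul_div_cancel₀ _ hq
  refine ⟨![s, t, -c / q], ⟨fun h => hq ?_, ?_, ?_⟩, fun h => hq ?_⟩
  · simp_all
  · rw [eval_cubicForm]
    linear_combination hz
  · rw [det_hessianAt_cubicForm_of_singular, ← hc, ← hq_def]
    linear_combination 8 * hdet - 2 * (4 * q₀ * q₂ - q₁ ^ 2) * hz
  · rw [gradientAt_cubicForm] at h
    simpa using congrFun h 2

theorem exists_isFlex_of_gradientAt_eq_zero (hK : HasOddDegreeRoots K)
    {Φ : MvPolynomial (Fin 3) K} (hΦ : Φ.IsHomogeneous 3) (hirr : Irreducible Φ)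
    {p : Fin 3 → K} (hp : p ≠ 0) (hgrad : gradientAt Φ p = 0) : ∃ p, IsFlex Φ p := by
  obtain ⟨M, hM, hMp⟩ := exists_isUnit_mulVec_eq hp
  obtain ⟨c₀, c₁, c₂, c₃, q₀, q₁, q₂, l₀, l₁, m, hcubic⟩ :=
    exists_eq_cubicForm (isHomogeneous_linSubst M hΦ)
  have hsing : gradientAt (linSubst M Φ) ![0, 0, 1] = 0 := by
    rw [gradientAt_linSubst, hMp, hgrad, Matrix.zero_vecMul]
  rw [hcubic, gradientAt_cubicForm] at hsing
  obtain rfl : l₀ = 0 := by simpa using congrFun hsing 0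
  obtain rfl : l₁ = 0 := by simpa using congrFun hsing 1
  obtain rfl : m = 0 := by simpa [three_ne_zero' K] using congrFun hsing 2
  obtain ⟨p', hp'⟩ := exists_isFlex_cubicForm_of_singular hK
    (hcubic ▸ isHomogeneous_linSubst M hΦ) (hcubic ▸ irreducible_linSubst hM hirr)
  exact ⟨M *ᵥ p', (hcubic ▸ hp').of_linSubst hM⟩

end SingularCubic

section SmoothPoint

variable {K : Type*} [Field K] [NeZero (2 : K)]

theorem exists_root_of_nagell_eliminant (hK : HasOddDegreeRoots K) {a d : K} (ha : a ≠ 0)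
    (hd : d ≠ 0) (e g : K) :
    ∃ y, (a * (a * y ^ 2 + g) ^ 3
          - (8 * a ^ 2 * d * y ^ 3 + 12 * a ^ 2 * e * y ^ 2 + 4 * a * e * g + 2 * d ^ 2)) ^ 2 =
      a ^ 2 * ((a * y ^ 2 + g) ^ 2 - 4 * (d * y + e)) ^ 3 := by
  let r : Polynomial K := .C a * .X ^ 2 + .C g
  let L : Polynomial K := .C d * .X + .C e
  let N : Polynomial K :=
    .C (8 * a ^ 2 * d) * .X ^ 3 + .C (12 * a ^ 2 * e) * .X ^ 2 + .C (4 * a * e * g + 2 * d ^ 2)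
  -- With `T = a * r ^ 3 - N` and `D = r ^ 2 - 4 * L`, the terms `a ^ 2 * r ^ 6` of `T ^ 2` and
  -- `a ^ 2 * D ^ 3` cancel, and `2 * a * r ^ 3` is left with the factor `P = 6 * a * r * L - N`.
  let P : Polynomial K :=
    .C (-2 * a ^ 2 * d) * .X ^ 3 + .C (-6 * a ^ 2 * e) * .X ^ 2 + .C (6 * a * d * g) * .X
      + .C (2 * a * e * g - 2 * d ^ 2)
  let f : Polynomial K :=
    .C (2 * a) * r ^ 3 * P + (N ^ 2 - .C (48 * a ^ 2) * r ^ 2 * L ^ 2 + .C (64 * a ^ 2) * L ^ 3)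
  have hdeg : f.natDegree = 9 := by
    have h2 : (2 : K) ≠ 0 := two_ne_zero
    simp only [f, r, L, N, P]
    compute_degree!
  obtain ⟨y, hy⟩ := hK f (by rw [hdeg]; decide)
  refine ⟨y, ?_⟩
  simp only [f, r, L, N, P, Polynomial.IsRoot.def, Polynomial.eval_add, Polynomial.eval_sub,
    Polynomial.eval_mul, Polynomial.eval_C, Polynomial.eval_pow, Polynomial.eval_X] at hy
  linear_combination hy

/-- Nagell's normal form `x z² + (a y² + g x²) z + x² (d y + e x)` of a cubic that touches `x = 0`
at `(0 : 0 : 1)`. For `a ≠ 0` it meets `x = 0` again at `(0 : 1 : 0)`, with tangent `z = 0`. -/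
noncomputable def nagellForm {R : Type*} [CommRing R] (a d e g : R) : MvPolynomial (Fin 3) R :=
  cubicForm e d 0 0 g 0 a 1 0 0

theorem exists_isHessianPoint_nagellForm (hK : HasOddDegreeRoots K) {a d : K} (ha : a ≠ 0)
    (hd : d ≠ 0) (e g : K) : ∃ p, IsHessianPoint (nagellForm a d e g) p := by
  obtain ⟨y, hy⟩ := exists_root_of_nagell_eliminant hK ha hd e g
  set r := a * y ^ 2 + g
  set N := 8 * a ^ 2 * d * y ^ 3 + 12 * a ^ 2 * e * y ^ 2 + 4 * a * e * g + 2 * d ^ 2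
  have hcop : ((a * r ^ 3 - N) / a) ^ 2 = (r ^ 2 - 4 * (d * y + e)) ^ 3 := by
    field_simp
    exact hy
  obtain ⟨w, hw3, hw2⟩ := (pow_eq_pow_iff_of_coprime (by decide)).mp hcop
  rw [div_eq_iff ha] at hw3
  obtain ⟨z, rfl⟩ : ∃ z, w = 2 * z + r := ⟨(w - r) / 2, by field_simp; ring⟩
  have hcurve : z ^ 2 + r * z + (d * y + e) = 0 := by
    refine (mul_eq_zero.mp ?_).resolve_left (pow_ne_zero 2 (two_ne_zero' K))
    linear_combination -hw2
  refine ⟨![1, y, z], fun h => one_ne_zero (congrFun h 0), ?_, ?_⟩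
  · rw [nagellForm, eval_cubicForm]
    linear_combination hcurve
  · rw [nagellForm, hessianAt_cubicForm, Matrix.det_fin_three]
    simp only [Matrix.of_apply, Matrix.cons_val]
    linear_combination 4 * hw3 + (24 * a * z + 24 * a * r - 8 * a * g) * hcurve

theorem exists_linSubst_cubicForm_eq_nagellForm (c₀ c₁ c₂ c₃ q₀ q₁ : K) {q₂ : K} (hq : q₂ ≠ 0) :
    ∃ M : Matrix (Fin 3) (Fin 3) K, IsUnit M ∧
      ∃ d e g, linSubst M (cubicForm c₀ c₁ c₂ c₃ q₀ q₁ q₂ 1 0 0) = nagellForm q₂ d e g := by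
  have h2 : (2 : K) ≠ 0 := two_ne_zero
  set t := -c₃ / q₂ with ht
  set r := -(q₁ + 2 * t) / (2 * q₂) with hr
  set s := -(c₂ + 3 * c₃ * r + q₁ * t + q₂ * (2 * r * t) + t ^ 2) / q₂ with hs
  have hyyy : c₃ + q₂ * t = 0 := by
    rw [ht]
    field_simp
    ring
  have hxyz : q₁ + 2 * q₂ * r + 2 * t = 0 := by
    rw [hr]
    field_simp
    ring
  have hxyy : c₂ + 3 * c₃ * r + q₁ * t + q₂ * (2 * r * t + s) + t ^ 2 = 0 := by
    rw [hs]
    field_simp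
    ring
  have hM : IsUnit !![1, 0, 0; r, 1, 0; s, t, 1] := by
    simp [Matrix.isUnit_iff_isUnit_det, Matrix.det_fin_three]
  have hshear := linSubst_shear_cubicForm c₀ c₁ c₂ c₃ q₀ q₁ q₂ r s t
  rw [hyyy, hxyz, hxyy] at hshear
  exact ⟨_, hM, _, _, _, hshear⟩

theorem exists_isHessianPoint_cubicForm_of_tangent (hK : HasOddDegreeRoots K)
    (c₀ c₁ c₂ c₃ q₀ q₁ q₂ : K) :
    ∃ p, IsHessianPoint (cubicForm c₀ c₁ c₂ c₃ q₀ q₁ q₂ 1 0 0) p := by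
  by_cases hq : q₂ = 0
  · refine ⟨![0, 0, 1], by simp, by simp [eval_cubicForm], ?_⟩
    simp [hessianAt_cubicForm, Matrix.det_fin_three, hq]
  obtain ⟨M, hM, d, e, g, hnagell⟩ :=
    exists_linSubst_cubicForm_eq_nagellForm c₀ c₁ c₂ c₃ q₀ q₁ hq
  obtain ⟨p, hp⟩ : ∃ p, IsHessianPoint (nagellForm q₂ d e g) p := by
    by_cases hd : d = 0
    · refine ⟨![0, 1, 0], by simp, by simp [nagellForm, eval_cubicForm], ?_⟩
      simp [nagellForm, hessianAt_cubicForm, Matrix.det_fin_three, hd]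
    · exact exists_isHessianPoint_nagellForm hK hq hd e g
  exact ⟨M *ᵥ p, (hnagell ▸ hp).of_linSubst hM⟩

theorem exists_isHessianPoint_of_gradientAt_ne_zero (hK : HasOddDegreeRoots K)
    {Φ : MvPolynomial (Fin 3) K} (hΦ : Φ.IsHomogeneous 3) {p : Fin 3 → K} (hp : p ≠ 0)
    (hpΦ : eval p Φ = 0) (hgrad : gradientAt Φ p ≠ 0) : ∃ p, IsHessianPoint Φ p := by
  have htangent : gradientAt Φ p ⬝ᵥ p = 0 := by
    rw [gradientAt_dotProduct_self hΦ, hpΦ, mul_zero]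
  obtain ⟨M, hM, hMp, hMgrad⟩ := exists_isUnit_mulVec_eq_vecMul_eq hgrad hp htangent
  obtain ⟨c₀, c₁, c₂, c₃, q₀, q₁, q₂, l₀, l₁, m, hcubic⟩ :=
    exists_eq_cubicForm (isHomogeneous_linSubst M hΦ)
  have hm : eval ![0, 0, 1] (linSubst M Φ) = 0 := by rw [eval_linSubst, hMp, hpΦ]
  have hl : gradientAt (linSubst M Φ) ![0, 0, 1] = ![1, 0, 0] := by
    rw [gradientAt_linSubst, hMp, hMgrad]
  rw [hcubic, eval_cubicForm] at hm
  rw [hcubic, gradientAt_cubicForm] at hl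
  obtain rfl : m = 0 := by simpa using hm
  obtain rfl : l₀ = 1 := by simpa using congrFun hl 0
  obtain rfl : l₁ = 0 := by simpa using congrFun hl 1
  obtain ⟨p', hp'⟩ := exists_isHessianPoint_cubicForm_of_tangent hK c₀ c₁ c₂ c₃ q₀ q₁ q₂
  exact ⟨M *ᵥ p', (hcubic ▸ hp').of_linSubst hM⟩

end SmoothPoint

section FlexExistence

variable {K : Type*} [Field K]

theorem exists_ne_zero_eval_eq_zero (hK : HasOddDegreeRoots K) {Φ : MvPolynomial (Fin 3) K}
    (hΦ : Φ.IsHomogeneous 3) : ∃ p, p ≠ 0 ∧ eval p Φ = 0 := by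
  obtain ⟨c₀, c₁, c₂, c₃, q₀, q₁, q₂, l₀, l₁, m, rfl⟩ := exists_eq_cubicForm hΦ
  obtain ⟨s, t, hst, h⟩ := hK.exists_binaryCubic_eq_zero c₀ c₁ c₂ c₃
  refine ⟨![s, t, 0], fun h0 => ?_, by simpa [eval_cubicForm] using h⟩
  exact hst.elim (· (congrFun h0 0)) (· (congrFun h0 1))

theorem irreducible_cubic_has_flex_general [NeZero (2 : K)] [NeZero (3 : K)]
    (hK : HasOddDegreeRoots K) {Φ : MvPolynomial (Fin 3) K} (hΦ : Φ.IsHomogeneous 3)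
    (hirr : Irreducible Φ) :
    ∃ p : Fin 3 → K, p ≠ 0 ∧ eval p Φ = 0 ∧ (∃ i, eval p (pderiv i Φ) ≠ 0) ∧
      Matrix.det (Matrix.of fun i j => eval p (pderiv i (pderiv j Φ))) = 0 := by
  suffices ∃ p, IsFlex Φ p by
    obtain ⟨p, ⟨hp, hpΦ, hdet⟩, hgrad⟩ := this
    exact ⟨p, hp, hpΦ, Function.ne_iff.mp hgrad, hdet⟩
  by_cases hsing : ∃ p, p ≠ 0 ∧ gradientAt Φ p = 0
  · obtain ⟨p, hp, hgrad⟩ := hsing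
    exact exists_isFlex_of_gradientAt_eq_zero hK hΦ hirr hp hgrad
  · push Not at hsing
    obtain ⟨p, hp, hpΦ⟩ := exists_ne_zero_eval_eq_zero hK hΦ
    obtain ⟨p', hp'⟩ := exists_isHessianPoint_of_gradientAt_ne_zero hK hΦ hp hpΦ (hsing p hp)
    exact ⟨p', hp', hsing p' hp'.1⟩

end FlexExistence

/-- **Statement 11.** Every irreducible real (and every irreducible complex) cubic curve has
a flex point: if `Φ` is an irreducible homogeneous polynomial of degree 3, then there is a
nonzero point `p` on the curve `Φ = 0` where the gradient of `Φ` does not vanish but the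
determinant of the Hessian matrix of `Φ` vanishes. -/
theorem irreducible_cubic_has_flex :
    (∀ Φ : MvPolynomial (Fin 3) ℝ, Φ.IsHomogeneous 3 → Irreducible Φ →
      ∃ p : Fin 3 → ℝ, p ≠ 0 ∧ eval p Φ = 0 ∧ (∃ i, eval p (pderiv i Φ) ≠ 0) ∧
        Matrix.det (Matrix.of fun i j => eval p (pderiv i (pderiv j Φ))) = 0) ∧
    (∀ Φ : MvPolynomial (Fin 3) ℂ, Φ.IsHomogeneous 3 → Irreducible Φ →
      ∃ p : Fin 3 → ℂ, p ≠ 0 ∧ eval p Φ = 0 ∧ (∃ i, eval p (pderiv i Φ) ≠ 0) ∧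
        Matrix.det (Matrix.of fun i j => eval p (pderiv i (pderiv j Φ))) = 0) := by
  exact ⟨fun _ => irreducible_cubic_has_flex_general hasOddDegreeRoots_real,
    fun _ => irreducible_cubic_has_flex_general (hasOddDegreeRoots_of_isAlgClosed ℂ)⟩
end
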